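/- Let F = F_q, χ a multiplicative character of order d = q-1, χ_a = χ^a with 0 < a < q-1, χ_b = χ^b with 0 ≤ b < q-1. Let S, T be non-empty subsets of F and A : F → F with A(y) ≠ y for all y. Then for each natural number r ≥ 1, Σ_{y∈T} |Σ_{s∈S} χ_a(s+y)χ_b(s+A(y))| ≤ λ_r · q^{1/(4r)} · |S|^{1-1/(2r)} · |T|, where λ_r = ((4r-1)² + (2r)^{4r}·q·|T|^{-r})^{1/(4r)}. -/

import Mathlib

open Finset

open Polynomial in
lemma W_irr {L : Type*} [Field L] (d : ℕ) (hd : 0 < d) (c : L)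
    (H : ∀ e (u : L), c ^ e = u ^ d → d ∣ e) : Irreducible (X ^ d - C c) := by
  have hmon : (X ^ d - C c : L[X]).Monic := monic_X_pow_sub_C c hd.ne'
  have hdeg : (X ^ d - C c : L[X]).natDegree = d := natDegree_X_pow_sub_C
  have hroot : ∃ α : AlgebraicClosure L, α ^ d = algebraMap L _ c := IsAlgClosed.exists_pow_nat_eq _ hd
  obtain ⟨α, hα⟩ := hroot
  have hint : IsIntegral L α := Algebra.IsIntegral.isIntegral α
  have hdvd : minpoly L α ∣ X ^ d - C c := minpoly.dvd L α (by simp [hα])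
  have hfin : Module.finrank L (IntermediateField.adjoin L {α}) = (minpoly L α).natDegree :=
    IntermediateField.adjoin.finrank hint
  have : FiniteDimensional L (IntermediateField.adjoin L {α}) :=
    IntermediateField.adjoin.finiteDimensional hint
  have hgen : (IntermediateField.AdjoinSimple.gen L α) ^ d = algebraMap L _ c := by
    apply Subtype.ext
    simpa using hα
  have h1 := congrArg (Algebra.norm L) hgen
  rw [map_pow, Algebra.norm_algebraMap, hfin] at h1
  have h2 := H _ _ h1.symm
  have hpos : 0 < (minpoly L α).natDegree := minpoly.natDegree_pos hint
  have h3 : minpoly L α = X ^ d - C c := by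
    symm
    apply Polynomial.eq_of_monic_of_dvd_of_natDegree_le (minpoly.monic hint) hmon hdvd
    rw [hdeg]; exact Nat.le_of_dvd hpos h2
  rw [← h3]; exact minpoly.irreducible hint

open Polynomial in
lemma W_det_deg {K : Type*} [Field K] {n : ℕ} (A : Matrix (Fin n) (Fin n) K[X]) (b : Fin n → ℕ)
    (h : ∀ i j, (A i j).natDegree ≤ b j) : A.det.natDegree ≤ ∑ j, b j := by
  rw [Matrix.det_apply]
  refine natDegree_sum_le_of_forall_le _ _ ?_
  intro σ _
  refine (natDegree_smul_le _ _).trans ?_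
  refine (natDegree_prod_le _ _).trans ?_
  exact Finset.sum_le_sum fun i _ => h _ _

open Polynomial in
lemma W_res_deg {K : Type*} [Field K] (f g : K[X][X]) (m n a b : ℕ)
    (hf : ∀ i, (f.coeff i).natDegree ≤ a) (hg : ∀ i, (g.coeff i).natDegree ≤ b) :
    (resultant f g m n).natDegree ≤ m * b + n * a := by
  have := W_det_deg (sylvester f g m n) (fun j => j.addCases (fun _ => b) (fun _ => a)) (by
    intro i j
    induction j using Fin.addCases with
    | left j => 
      simp only [sylvester, Matrix.of_apply, Fin.addCases_left]
      split_ifs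
      · exact hg _
      · simp
    | right j => 
      simp only [sylvester, Matrix.of_apply, Fin.addCases_right]
      split_ifs
      · exact hf _
      · simp)
  refine this.trans ?_
  rw [Fin.sum_univ_add]
  simp

/-- hypothesis on `h`: no proper power is a `d`-th power up to constant, in the function field -/
def WNoPow {K : Type*} [Field K] (h : Polynomial K) (d : ℕ) : Prop :=
  ∀ (e : ℕ) (l : K) (p q : Polynomial K), l ≠ 0 → p ≠ 0 → q ≠ 0 →
    Polynomial.C l * q ^ d = p ^ d * h ^ e → d ∣ e

open Polynomial in
lemma W_indep {K : Type*} [Field K] (h : K[X]) (d Q H δ : ℕ) (hd : 0 < d)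
    (h0 : h.eval 0 ≠ 0) (hN : WNoPow h d) (hδ : h.natDegree ≤ δ)
    (hH : d * H + d * δ < Q) (P : K[X][X]) (hPd : P.natDegree < d)
    (hPH : ∀ j, (P.coeff j).natDegree ≤ H) (w : K[X])
    (hw : X ^ Q ∣ h * w ^ d - C (h.eval 0)) (hP : X ^ Q ∣ P.eval w) : P = 0 := by
  by_contra hP0
  set G : K[X][X] := C h * X ^ d - C (C (h.eval 0)) with hG
  have hh0 : h ≠ 0 := by rintro rfl; simp at h0
  have hGd : G.natDegree = d := by
    rw [hG, natDegree_sub_C, natDegree_C_mul hh0, natDegree_X_pow]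
  have hres : resultant P G P.natDegree d ≠ 0 := by
    intro h1
    let φ : K[X] →+* RatFunc K := algebraMap K[X] (RatFunc K)
    have hinj : Function.Injective φ := RatFunc.algebraMap_injective K
    have hφh : φ h ≠ 0 := by
      rw [Ne, map_eq_zero_iff φ hinj]; exact hh0
    have h2 : resultant (P.map φ) (G.map φ) = 0 := by
      rw [natDegree_map_eq_of_injective hinj, natDegree_map_eq_of_injective hinj, hGd,
        resultant_map_map, h1, map_zero]
    rw [resultant_eq_zero_iff] at h2
    apply h2.2
    have hGe : G.map φ = C (φ h) * (X ^ d - C (φ (C (h.eval 0)) / φ h)) := by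
      rw [mul_sub, ← C_mul, mul_div_cancel₀ _ hφh]
      simp [hG, φ]
    rw [hGe]
    have hirr : Irreducible (X ^ d - C (φ (C (h.eval 0)) / φ h)) := by
      apply W_irr d hd
      intro e u hu
      have hφc : φ (C (h.eval 0)) ≠ 0 := by
        rw [Ne, map_eq_zero_iff φ hinj]; simpa using h0
      have hu0 : u ≠ 0 := by
        rintro rfl
        rw [zero_pow hd.ne'] at hu
        exact pow_ne_zero e (div_ne_zero hφc hφh) hu
      obtain ⟨p, q, hq, hpq⟩ : ∃ p q : K[X], q ≠ 0 ∧ u = φ p / φ q :=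
        ⟨u.num, u.denom, u.denom_ne_zero, (RatFunc.num_div_denom u).symm⟩
      have hφq : φ q ≠ 0 := by
        rw [Ne, map_eq_zero_iff φ hinj]; exact hq
      have hp : p ≠ 0 := by
        rintro rfl; simp at hpq; exact hu0 hpq
      refine hN e ((h.eval 0) ^ e) p q (pow_ne_zero _ h0) hp hq ?_
      apply hinj
      rw [hpq, div_pow, div_pow, div_eq_div_iff (pow_ne_zero _ hφh) (pow_ne_zero _ hφq)] at hu
      simpa [φ] using hu
    have hu : IsUnit (C (φ h)) := by
      rw [isUnit_C]; exact isUnit_iff_ne_zero.mpr hφh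
    rw [isCoprime_mul_unit_left_right hu]
    refine (IsCoprime.symm ?_)
    rw [hirr.coprime_iff_not_dvd]
    intro hdv
    have := natDegree_le_of_dvd hdv (by rwa [Ne, Polynomial.map_eq_zero_iff hinj])
    rw [natDegree_X_pow_sub_C, natDegree_map_eq_of_injective hinj] at this
    omega
  obtain ⟨p, q, -, -, hpq⟩ := exists_mul_add_mul_eq_C_resultant (m := P.natDegree) (n := d) P G le_rfl hGd.le
    (Or.inr hd.ne')
  have hdeg := W_res_deg P G P.natDegree d H δ hPH (by
    intro i
    rw [hG]
    simp only [coeff_sub, coeff_C_mul, coeff_X_pow, coeff_C]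
    refine (natDegree_sub_le _ _).trans (max_le ?_ ?_)
    · split_ifs <;> simp [hδ]
    · split_ifs <;> simp)
  have hdvd : X ^ Q ∣ resultant P G P.natDegree d := by
    have := congrArg (eval w) hpq
    rw [eval_C] at this
    rw [← this, eval_add, eval_mul, eval_mul]
    refine dvd_add (hP.mul_right _) (Dvd.dvd.mul_right ?_ _)
    simpa [hG] using hw
  have := natDegree_le_of_dvd hdvd hres
  rw [natDegree_X_pow] at this
  have : P.natDegree * δ ≤ d * δ := Nat.mul_le_mul_right _ hPd.le
  omega

open Polynomial in
lemma W_hasse_dvd {K : Type*} [Field K] (h : K[X]) (N : ℕ) :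
    ∀ (l : ℕ) (g : K[X]), h ^ (N - l) ∣ hasseDeriv l (h ^ N * g) := by
  induction N with
  | zero => intro l g; simp
  | succ N ih =>
    intro l g
    rw [pow_succ', mul_assoc, hasseDeriv_mul]
    refine Finset.dvd_sum ?_
    rintro ⟨a, b⟩ hab
    rw [Finset.HasAntidiagonal.mem_antidiagonal] at hab
    simp only at hab ⊢
    rcases Nat.eq_zero_or_pos a with rfl | ha
    · rw [hasseDeriv_zero']
      have hb : b = l := by omega
      subst hb
      refine dvd_trans ?_ (mul_dvd_mul_left h (ih b g))
      rw [← pow_succ']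
      exact pow_dvd_pow _ (by omega)
    · exact Dvd.dvd.mul_left ((pow_dvd_pow _ (by omega)).trans (ih b g)) _

open Polynomial in
lemma W_hasse_quot {K : Type*} [Field K] (h : K[X]) (hh : h ≠ 0) (δ : ℕ) (hδ : h.natDegree ≤ δ)
    (N l i : ℕ) (hl : l ≤ N) :
    ∃ D : K[X], hasseDeriv l (h ^ N * X ^ i) = h ^ (N - l) * D ∧ D.natDegree ≤ l * δ + i := by
  obtain ⟨D, hD⟩ := W_hasse_dvd h N l (X ^ i)
  refine ⟨D, hD, ?_⟩
  by_cases hD0 : D = 0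
  · simp [hD0]
  have h1 := natDegree_hasseDeriv_le (h ^ N * X ^ i) l
  rw [hD, natDegree_mul (pow_ne_zero _ hh) hD0, natDegree_mul (pow_ne_zero _ hh) (by simp),
    natDegree_pow, natDegree_pow, natDegree_X_pow] at h1
  have h2 : N * h.natDegree = (N - l) * h.natDegree + l * h.natDegree := by
    rw [← add_mul]; congr 1; omega
  have h3 : l * h.natDegree ≤ l * δ := Nat.mul_le_mul_left _ hδ
  omega

open Polynomial in
lemma W_stepanov {K : Type*} [Field K] [Fintype K] [DecidableEq K] (d t δ M : ℕ) (h : K[X])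
    (hd : 0 < d) (hcard : Fintype.card K = (d * t + 1) ^ 2) (hM : M = d * t ^ 2 + 2 * t)
    (h0 : h.eval 0 ≠ 0) (hN : WNoPow h d)
    (hδ : h.natDegree ≤ δ) (ht : δ < t) (ζ : K) :
    (Finset.univ.filter (fun x : K => h.eval x ^ M = ζ)).card * (d * t) ≤
      δ * (d * t) + Fintype.card K * (t + 2 * δ + 2) := by
  classical
  set Q := Fintype.card K with hQ
  have hh0 : h ≠ 0 := by rintro rfl; simp at h0
  have hdM : d * M + 1 = Q := by rw [hcard, hM]; ring
  have hMt : t ≤ M := by rw [hM]; nlinarith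
  obtain ⟨H, hH⟩ : ∃ H, M = H + δ := ⟨M - δ, by omega⟩
  set B := t + δ + 1 with hB
  set ℓ := d * t with hℓ
  set E := ℓ * δ + H + B with hE
  have hℓQ : ℓ ≤ Q := by rw [hcard]; nlinarith
  have hquot : ∀ l j i : ℕ, ∃ D : K[X], l ≤ ℓ →
      hasseDeriv l (h ^ (ℓ + j * M) * X ^ i) = h ^ (ℓ + j * M - l) * D ∧
        D.natDegree ≤ l * δ + i := by
    intro l j i
    by_cases hl : l ≤ ℓ
    · obtain ⟨D, hD⟩ := W_hasse_quot h hh0 δ hδ (ℓ + j * M) l i (by omega)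
      exact ⟨D, fun _ => hD⟩
    · exact ⟨0, fun h => absurd h hl⟩
  choose D hD using hquot
  -- the linear system
  let Mat : Matrix (Fin ℓ × Fin E) (Fin d × Fin B × Fin H) K := Matrix.of fun le jki =>
    (C (ζ ^ (jki.1 : ℕ)) * D le.1 jki.1 jki.2.2 * X ^ (jki.2.1 : ℕ)).coeff le.2
  obtain ⟨c, hcker, hc0⟩ : ∃ c : Fin d × Fin B × Fin H → K, Mat.mulVecLin c = 0 ∧ c ≠ 0 := by
    have hlt : Module.finrank K (Fin ℓ × Fin E → K) < Module.finrank K (Fin d × Fin B × Fin H → K) := by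
      simp only [Module.finrank_fintype_fun_eq_card, Fintype.card_prod, Fintype.card_fin]
      rw [hE, hB, hℓ]
      have h1 : H + δ = d * t ^ 2 + 2 * t := by omega
      zify at h1 ht ⊢
      have h2 : (H : ℤ) = d * t ^ 2 + 2 * t - δ := by linarith
      rw [h2]
      have hd' : (1 : ℤ) ≤ d := by exact_mod_cast hd
      have hδ0 : (0 : ℤ) ≤ δ := by positivity
      have : (0 : ℤ) ≤ (d - 1) * (d * t ^ 2) := mul_nonneg (by linarith) (by positivity)
      have : (0 : ℤ) < (δ + 1) * (d * (t - δ)) :=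
        mul_pos (by linarith) (mul_pos (by linarith) (by linarith))
      nlinarith
    have := LinearMap.ker_ne_bot_of_finrank_lt (f := Mat.mulVecLin) hlt
    obtain ⟨c, hc, hc0⟩ := (Submodule.ne_bot_iff _).1 this
    exact ⟨c, hc, hc0⟩
  have hsys : ∀ l, l < ℓ → ∑ jki : Fin d × Fin B × Fin H,
      C (c jki) * (C (ζ ^ (jki.1 : ℕ)) * D l jki.1 jki.2.2 * X ^ (jki.2.1 : ℕ)) = 0 := by
    intro l hl
    ext e
    rw [finsetSum_coeff, coeff_zero]
    by_cases he : e < E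
    · have := congrFun hcker (⟨l, hl⟩, ⟨e, he⟩)
      simp only [Matrix.mulVecLin_apply, Matrix.mulVec, dotProduct, Mat, Matrix.of_apply,
        Pi.zero_apply] at this
      rw [← this]
      refine Finset.sum_congr rfl fun x _ => ?_
      rw [coeff_C_mul, mul_comm]
    · refine Finset.sum_eq_zero fun x _ => ?_
      apply coeff_eq_zero_of_natDegree_lt
      have h1 := (hD l x.1 x.2.2 hl.le).2
      refine lt_of_le_of_lt (natDegree_C_mul_le _ _) ?_
      refine lt_of_le_of_lt (natDegree_mul_le) ?_
      refine lt_of_le_of_lt (Nat.add_le_add (natDegree_C_mul_le _ _) le_rfl) ?_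
      rw [natDegree_X_pow]
      have h2 := x.2.1.2
      have h3 := x.2.2.2
      have h4 : l * δ ≤ ℓ * δ := Nat.mul_le_mul_right _ hl.le
      omega
  set R : K[X] := ∑ jki : Fin d × Fin B × Fin H,
      C (c jki) * (h ^ (ℓ + (jki.1 : ℕ) * M) * X ^ (jki.2.2 : ℕ)) * X ^ ((jki.2.1 : ℕ) * Q) with hR
  have hvan : ∀ x : K, h.eval x ^ M = ζ → (X - C x) ^ ℓ ∣ R := by
    intro x hx
    have key : X ^ ℓ ∣ taylor x R := by
      rw [X_pow_dvd_iff]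
      intro l hl
      have hterm : ∀ jki : Fin d × Fin B × Fin H,
          (taylor x (C (c jki) * (h ^ (ℓ + (jki.1 : ℕ) * M) * X ^ (jki.2.2 : ℕ)) *
            X ^ ((jki.2.1 : ℕ) * Q))).coeff l = 
          h.eval x ^ (ℓ - l) * (C (c jki) * (C (ζ ^ (jki.1 : ℕ)) * D l jki.1 jki.2.2 * X ^ (jki.2.1 : ℕ))).eval x := by
        intro jki
        have h1 : ∃ g : K[X], taylor x (X ^ ((jki.2.1 : ℕ) * Q) : K[X]) = C (x ^ (jki.2.1 : ℕ)) + X ^ Q * g := by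
          have h2 : taylor x (X ^ ((jki.2.1 : ℕ) * Q) : K[X]) = (X ^ Q + C x) ^ (jki.2.1 : ℕ) := by
            rw [taylor_X_pow, mul_comm, pow_mul]
            congr 1
            rw [← FiniteField.expand_card]
            simp [hQ]
          rw [h2]
          have h3 : (X ^ Q : K[X]) ∣ (X ^ Q + C x) ^ (jki.2.1 : ℕ) - C x ^ (jki.2.1 : ℕ) := by
            have := sub_dvd_pow_sub_pow (X ^ Q + C x : K[X]) (C x) (jki.2.1 : ℕ)
            simpa using this
          obtain ⟨g, hg⟩ := h3
          exact ⟨g, by rw [C_pow, ← hg]; ring⟩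
        obtain ⟨g, hg⟩ := h1
        rw [taylor_mul, taylor_mul, taylor_C, hg, mul_add, coeff_add]
        have h4 : (C (c jki) * taylor x (h ^ (ℓ + (jki.1 : ℕ) * M) * X ^ (jki.2.2 : ℕ)) * (X ^ Q * g)).coeff l = 0 := by
          have : X ^ Q ∣ (C (c jki) * taylor x (h ^ (ℓ + (jki.1 : ℕ) * M) * X ^ (jki.2.2 : ℕ)) * (X ^ Q * g)) :=
            Dvd.dvd.mul_left (dvd_mul_right _ _) _
          exact (X_pow_dvd_iff.1 this) l (by omega)
        rw [h4, add_zero, coeff_mul_C, coeff_C_mul, taylor_coeff, (hD l jki.1 jki.2.2 hl.le).1]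
        simp only [eval_mul, eval_pow, eval_C, eval_X]
        have h5 : h.eval x ^ (ℓ + (jki.1 : ℕ) * M - l) = h.eval x ^ (ℓ - l) * ζ ^ (jki.1 : ℕ) := by
          rw [← hx, ← pow_mul, ← pow_add]
          congr 1
          rw [mul_comm M]
          omega
        rw [h5]; ring
      rw [hR, map_sum, finsetSum_coeff, Finset.sum_congr rfl (fun jki _ => hterm jki),
        ← Finset.mul_sum, ← eval_finsetSum, hsys l hl]
      simp
    obtain ⟨g, hg⟩ := key
    refine ⟨taylor (-x) g, ?_⟩
    have h1 := congrArg (taylor (-x)) hg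
    rw [taylor_taylor] at h1
    simp only [neg_add_cancel, taylor_zero, taylor_mul, taylor_X_pow] at h1
    rw [h1]; simp [sub_eq_add_neg]
  have hRne : R ≠ 0 := by
    intro hR0
    let P : ℕ → K[X][X] := fun k => if hk : k < B then ∑ j : Fin d, ∑ i : Fin H,
      C (C (c (j, ⟨k, hk⟩, i)) * X ^ (i : ℕ)) * X ^ (j : ℕ) else 0
    have hRP : R = h ^ ℓ * ∑ k ∈ Finset.range B, X ^ (k * Q) * (P k).eval (h ^ M) := by
      rw [hR, Fintype.sum_prod_type]
      simp_rw [Fintype.sum_prod_type]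
      rw [Finset.sum_comm, Finset.mul_sum, Finset.sum_range]
      refine Finset.sum_congr rfl fun k _ => ?_
      simp only [P, k.2, dif_pos, eval_finsetSum, eval_mul, eval_C, eval_pow, eval_X, Finset.mul_sum]
      refine Finset.sum_congr rfl fun j _ => ?_
      refine Finset.sum_congr rfl fun i _ => ?_
      rw [pow_add, mul_comm (j : ℕ) M, pow_mul]
      ring
    have hPcoeff : ∀ k (hk : k < B) (j : ℕ) (hj : j < d), (P k).coeff j =
        ∑ i : Fin H, C (c (⟨j, hj⟩, ⟨k, hk⟩, i)) * X ^ (i : ℕ) := by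
      intro k hk j hj
      simp only [P, hk, dif_pos, finsetSum_coeff]
      rw [Finset.sum_eq_single (⟨j, hj⟩ : Fin d)]
      · refine Finset.sum_congr rfl fun i _ => ?_
        rw [coeff_C_mul, coeff_X_pow, if_pos rfl, mul_one]
      · intro b _ hb
        refine Finset.sum_eq_zero fun i _ => ?_
        have : j ≠ b := fun h => hb (Fin.ext h.symm)
        rw [coeff_C_mul, coeff_X_pow, if_neg this, mul_zero]
      · simp
    have hPdeg : ∀ k, (P k).natDegree < d := by
      intro k
      by_cases hk : k < B
      · have : (P k).natDegree ≤ d - 1 := by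
          simp only [P, hk, dif_pos]
          refine natDegree_sum_le_of_forall_le _ _ fun j _ => ?_
          refine natDegree_sum_le_of_forall_le _ _ fun i _ => ?_
          refine (natDegree_C_mul_le _ _).trans ?_
          rw [natDegree_X_pow]
          have := j.2
          omega
        omega
      · simp [P, hk, hd]
    have hPH : ∀ k j, ((P k).coeff j).natDegree ≤ H := by
      intro k j
      by_cases hk : k < B
      · by_cases hj : j < d
        · rw [hPcoeff k hk j hj]
          refine natDegree_sum_le_of_forall_le _ _ fun i _ => ?_
          refine (natDegree_C_mul_le _ _).trans ?_
          rw [natDegree_X_pow]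
          exact i.2.le
        · rw [coeff_eq_zero_of_natDegree_lt ((hPdeg k).trans_le (not_lt.1 hj))]; simp
      · simp [P, hk]
    have hsum : ∑ k ∈ Finset.range B, X ^ (k * Q) * (P k).eval (h ^ M) = 0 := by
      rw [hRP] at hR0
      exact (mul_eq_zero.1 hR0).resolve_left (pow_ne_zero _ hh0)
    have hw : X ^ Q ∣ h * (h ^ M) ^ d - C (h.eval 0) := by
      have h1 : h * (h ^ M) ^ d = h ^ Q := by
        rw [← pow_mul, ← pow_succ', mul_comm, hdM]
      have h2 : h ^ Q = expand K Q h.divX * X ^ Q + C (h.eval 0) := by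
        rw [hQ, ← FiniteField.expand_card]
        conv_lhs => rw [← divX_mul_X_add h]
        rw [map_add, map_mul, expand_X, expand_C, coeff_zero_eq_eval_zero]
      rw [h1, h2, add_sub_cancel_right]
      exact dvd_mul_left _ _
    have hPz : ∀ k, P k = 0 := by
      intro k
      induction k using Nat.strong_induction_on with
      | _ k ih =>
        by_cases hk : k < B
        · apply W_indep h d Q H δ hd h0 hN hδ (by rw [← mul_add, ← hH]; omega) (P k) (hPdeg k) (hPH k)
            (h ^ M) hw
          have h1 : X ^ ((k + 1) * Q) ∣ X ^ (k * Q) * (P k).eval (h ^ M) := by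
            rw [← Finset.add_sum_erase _ _ (Finset.mem_range.2 hk)] at hsum
            rw [eq_neg_of_add_eq_zero_left hsum]
            rw [dvd_neg]
            refine Finset.dvd_sum fun k' hk' => ?_
            rw [Finset.mem_erase] at hk'
            rcases lt_or_gt_of_ne hk'.1 with h2 | h2
            · simp [ih k' h2]
            · exact Dvd.dvd.mul_right (pow_dvd_pow _ (Nat.mul_le_mul_right _ h2)) _
          rw [add_mul, one_mul, pow_add] at h1
          exact (mul_dvd_mul_iff_left (pow_ne_zero _ X_ne_zero)).1 h1
        · simp [P, hk]
    apply hc0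
    funext ⟨j, k, i⟩
    have h1 := hPcoeff k k.2 j j.2
    rw [hPz, coeff_zero] at h1
    have h2 := congrArg (fun p => p.coeff (i : ℕ)) h1
    simp only [coeff_zero, finsetSum_coeff, coeff_C_mul, coeff_X_pow] at h2
    rw [Finset.sum_eq_single i] at h2
    · simpa using h2.symm
    · intro b _ hb
      have : (i : ℕ) ≠ b := fun h => hb (Fin.ext h.symm)
      simp [this]
    · simp
  have hprod : ∏ x ∈ Finset.univ.filter (fun x : K => h.eval x ^ M = ζ), (X - C x) ^ ℓ ∣ R := by
    refine Finset.prod_dvd_of_coprime ?_ ?_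
    · intro x _ y _ hxy
      exact IsCoprime.pow (isCoprime_X_sub_C_of_isUnit_sub (sub_ne_zero.2 hxy).isUnit)
    · intro x hx
      exact hvan x (by simpa using hx)
  have hdeg1 := natDegree_le_of_dvd hprod hRne
  rw [natDegree_prod_of_monic _ _ (fun x _ => (monic_X_sub_C x).pow _)] at hdeg1
  simp only [natDegree_pow, natDegree_X_sub_C, mul_one, Finset.sum_const, smul_eq_mul] at hdeg1
  refine hdeg1.trans ?_
  rw [hR]
  refine natDegree_sum_le_of_forall_le _ _ fun x _ => ?_
  refine (natDegree_mul_le).trans ?_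
  refine (Nat.add_le_add ((natDegree_C_mul_le _ _).trans natDegree_mul_le) le_rfl).trans ?_
  rw [natDegree_pow, natDegree_X_pow, natDegree_X_pow]
  have h1 := x.1.2
  have h2 := x.2.1.2
  have h3 := x.2.2.2
  have h4 : (ℓ + (x.1 : ℕ) * M) * h.natDegree ≤ (ℓ + Q) * δ := by
    refine Nat.mul_le_mul ?_ hδ
    have : (x.1 : ℕ) * M ≤ d * M := Nat.mul_le_mul_right _ h1.le
    omega
  have h5 : (x.2.1 : ℕ) * Q ≤ (t + δ) * Q := Nat.mul_le_mul_right _ (by omega)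
  have h6 : H ≤ Q := by nlinarith
  nlinarith

open Polynomial in
lemma W_nopow {K ι : Type*} [Field K] (C' : Finset ι) (v : ι → K) (hv : Function.Injective v)
    (e : ι → ℕ) (d : ℕ) (hg : Nat.gcd (C'.gcd e) d = 1) :
    WNoPow (∏ c ∈ C', (X + C (v c)) ^ e c) d := by
  classical
  intro k l p q hl hp hq heq
  set h : K[X] := ∏ c ∈ C', (X + C (v c)) ^ e c with hh
  have hmon : h.Monic := monic_prod_of_monic _ _ fun c _ => (monic_X_add_C _).pow _
  have hcount : ∀ c ∈ C', h.roots.count (- v c) = e c := by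
    intro c hc
    rw [hh, roots_prod _ _ (by rw [← hh]; exact hmon.ne_zero), Multiset.count_bind]
    change ∑ b ∈ C', Multiset.count (- v c) ((X + C (v b)) ^ e b).roots = e c
    rw [Finset.sum_eq_single c]
    · rw [roots_pow, roots_X_add_C]; simp
    · intro b _ hb
      rw [roots_pow, roots_X_add_C]
      have : - v c ≠ - v b := fun h => hb (hv (neg_injective h)).symm
      simp [this]
    · intro h; exact absurd hc h
  have hdvd : ∀ c ∈ C', d ∣ k * e c := by
    intro c hc
    have h1 := congrArg (fun f => f.roots.count (- v c)) heq
    rw [roots_C_mul _ hl, roots_mul (mul_ne_zero (pow_ne_zero _ hp) (pow_ne_zero _ hmon.ne_zero)),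
      roots_pow, roots_pow, roots_pow, Multiset.count_add, Multiset.count_nsmul, Multiset.count_nsmul,
      Multiset.count_nsmul, hcount c hc] at h1
    exact (Nat.dvd_add_right (dvd_mul_right _ _)).1 (h1 ▸ dvd_mul_right d _)
  have h2 : d ∣ C'.gcd (fun c => k * e c) := Finset.dvd_gcd hdvd
  rw [Finset.gcd_mul_left] at h2
  simp only [normalize_eq] at h2
  exact (Nat.Coprime.symm hg).dvd_of_dvd_mul_right h2

lemma W_sum_mu {F : Type*} [Field F] [Fintype F] [DecidableEq F] (χ : MulChar F ℂ)
    (hord : orderOf χ = Fintype.card F - 1) (d g : ℕ) (hdg : d * g = Fintype.card F - 1)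
    (hd : 1 < d) : ∑ u ∈ Finset.univ.filter (fun u : F => u ^ d = 1), χ u = 0 := by
  have hq : 1 < Fintype.card F := Fintype.one_lt_card
  have hg : 0 < g := by
    rcases Nat.eq_zero_or_pos g with rfl | h
    · simp at hdg; omega
    · exact h
  have hne : χ ^ g ≠ 1 := by
    intro h
    have := Nat.le_of_dvd hg (orderOf_dvd_of_pow_eq_one h)
    rw [hord, ← hdg] at this
    nlinarith
  obtain ⟨v, hv⟩ := (MulChar.ne_one_iff).1 hne
  rw [MulChar.pow_apply_coe] at hv
  set u0 : F := (v : F) ^ g with hu0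
  have hu0d : u0 ^ d = 1 := by
    rw [hu0, ← pow_mul, mul_comm, hdg]
    exact FiniteField.pow_card_sub_one_eq_one _ v.ne_zero
  have hu0n : u0 ≠ 0 := pow_ne_zero _ v.ne_zero
  have hχu0 : χ u0 ≠ 1 := by rwa [hu0, map_pow]
  have key : χ u0 * ∑ u ∈ Finset.univ.filter (fun u : F => u ^ d = 1), χ u =
      ∑ u ∈ Finset.univ.filter (fun u : F => u ^ d = 1), χ u := by
    rw [Finset.mul_sum]
    refine Finset.sum_bij (fun u _ => u0 * u) ?_ ?_ ?_ ?_
    · intro u hu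
      simp only [Finset.mem_filter, Finset.mem_univ, true_and] at hu ⊢
      rw [mul_pow, hu0d, hu, one_mul]
    · intro a _ b _ h
      exact mul_left_cancel₀ hu0n h
    · intro b hb
      simp only [Finset.mem_filter, Finset.mem_univ, true_and] at hb
      refine ⟨u0⁻¹ * b, ?_, by field_simp⟩
      simp [mul_pow, hu0d, hb]
    · intro u _; rw [map_mul]
  have : (χ u0 - 1) * ∑ u ∈ Finset.univ.filter (fun u : F => u ^ d = 1), χ u = 0 := by
    rw [sub_mul, key, one_mul, sub_self]
  exact (mul_eq_zero.1 this).resolve_left (sub_ne_zero.2 hχu0)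

/-- purely numerical equidistribution estimate -/
lemma W_equi {ι : Type*} [DecidableEq ι] (U : Finset ι) (z : ι → ℂ) (hz : ∀ u ∈ U, ‖z u‖ ≤ 1)
    (hz0 : ∑ u ∈ U, z u = 0) (n : ι → ℕ) (d : ℕ) (hd : 0 < d) (hU : U.card ≤ d) (Q E B : ℝ)
    (hQ : 0 ≤ Q) (hE : 0 ≤ E) (hB : 0 ≤ B)
    (hup : ∀ u ∈ U, (n u : ℝ) ≤ Q / d + E) (hsum : Q - B ≤ ∑ u ∈ U, (n u : ℝ)) :
    ‖∑ u ∈ U, z u * (n u : ℂ)‖ ≤ d * (B + d * E) := by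
  have hd' : (0 : ℝ) < d := by exact_mod_cast hd
  have hd1 : (1 : ℝ) ≤ d := by exact_mod_cast hd
  have h1 : ∑ u ∈ U, z u * (n u : ℂ) = ∑ u ∈ U, z u * (((n u : ℝ) - Q / d : ℝ) : ℂ) := by
    have : ∑ u ∈ U, z u * ((Q / d : ℝ) : ℂ) = 0 := by rw [← Finset.sum_mul, hz0, zero_mul]
    rw [← sub_zero (∑ u ∈ U, z u * (n u : ℂ)), ← this, ← Finset.sum_sub_distrib]
    refine Finset.sum_congr rfl fun u _ => ?_
    push_cast; ring
  rw [h1]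
  have habs : ∀ u ∈ U, |(n u : ℝ) - Q / d| ≤ B + d * E := by
    intro u hu
    rw [abs_le]
    constructor
    · rw [← Finset.add_sum_erase _ _ hu] at hsum
      have h2 : ∑ x ∈ U.erase u, (n x : ℝ) ≤ (U.erase u).card • (Q / d + E) :=
        Finset.sum_le_card_nsmul _ _ _ fun x hx => hup x (Finset.mem_of_mem_erase hx)
      rw [nsmul_eq_mul] at h2
      have h3 : ((U.erase u).card : ℝ) ≤ d - 1 := by
        have := Finset.card_erase_add_one hu
        have h4 : (U.erase u).card + 1 ≤ d := by omega
        have : ((U.erase u).card : ℝ) + 1 ≤ d := by exact_mod_cast h4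
        linarith
      have h5 : ((U.erase u).card : ℝ) * (Q / d + E) ≤ (d - 1) * (Q / d + E) := by
        apply mul_le_mul_of_nonneg_right h3; positivity
      have h6 : (d - 1) * (Q / d + E) = Q - Q / d + d * E - E := by field_simp; ring
      linarith
    · have := hup u hu
      nlinarith
  calc _ ≤ ∑ u ∈ U, ‖z u * (((n u : ℝ) - Q / d : ℝ) : ℂ)‖ := norm_sum_le _ _
    _ ≤ ∑ u ∈ U, (B + d * E) := by
        refine Finset.sum_le_sum fun u hu => ?_
        rw [norm_mul, Complex.norm_real, Real.norm_eq_abs]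
        calc _ ≤ 1 * |(n u : ℝ) - Q / d| := mul_le_mul_of_nonneg_right (hz u hu) (abs_nonneg _)
          _ ≤ _ := by rw [one_mul]; exact habs u hu
    _ = U.card * (B + d * E) := by rw [Finset.sum_const, nsmul_eq_mul]
    _ ≤ _ := by
        apply mul_le_mul_of_nonneg_right (by exact_mod_cast hU); positivity

lemma W_norm_le {F : Type*} [Field F] [Fintype F] (χ : MulChar F ℂ) (x : F) : ‖χ x‖ ≤ 1 := by
  by_cases hx : x = 0
  · subst hx; rw [MulChar.map_zero]; simp
  · have hq : 1 < Fintype.card F := Fintype.one_lt_card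
    have : χ x ^ (Fintype.card F - 1) = 1 := by
      rw [← map_pow, FiniteField.pow_card_sub_one_eq_one _ hx, map_one]
    exact (Complex.norm_eq_one_of_pow_eq_one this (by omega)).le

open Polynomial in
lemma W_ext {F : Type*} [Field F] [Fintype F] (χ : MulChar F ℂ)
    (hord : orderOf χ = Fintype.card F - 1) (Cs : Finset F) (e : F → ℕ)
    (c0 : F) (hc0 : c0 ∈ Cs) (he0 : ¬ (Fintype.card F - 1) ∣ e c0) (h0 : (0 : F) ∉ Cs) :
    ∃ A : ℝ, ∀ (n : ℕ) (K : Type) [Field K] [Fintype K] [Algebra F K],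
      Fintype.card K = Fintype.card F ^ (2 * n) →
      ‖∑ x : K, χ (Algebra.norm F (∏ c ∈ Cs, (x + algebraMap F K c) ^ e c))‖ ≤
        A * (Fintype.card F : ℝ) ^ n := by
  classical
  set q := Fintype.card F with hq
  have hq1 : 1 < q := Fintype.one_lt_card
  set g := Nat.gcd (Cs.gcd e) (q - 1) with hg
  have hgpos : 0 < g := Nat.gcd_pos_of_pos_right _ (by omega)
  obtain ⟨d, hd⟩ : g ∣ q - 1 := Nat.gcd_dvd_right _ _
  have hdpos : 0 < d := by
    rcases Nat.eq_zero_or_pos d with rfl | h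
    · simp at hd; omega
    · exact h
  have hge : ∀ c ∈ Cs, g ∣ e c := fun c hc => (Nat.gcd_dvd_left _ _).trans (Finset.gcd_dvd hc)
  have hd1 : 1 < d := by
    by_contra hcon
    have : d = 1 := by omega
    rw [this, mul_one] at hd
    exact he0 (hd ▸ hge c0 hc0)
  set e' : F → ℕ := fun c => e c / g with he'
  have hee' : ∀ c ∈ Cs, e c = g * e' c := fun c hc => (Nat.mul_div_cancel' (hge c hc)).symm
  have hcop : Nat.gcd (Cs.gcd e') d = 1 := by
    have h1 : Cs.gcd e = g * Cs.gcd e' := by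
      rw [Finset.gcd_congr rfl hee', Finset.gcd_mul_left]; simp
    have h2 : g * Nat.gcd (Cs.gcd e') d = g * 1 := by
      rw [← Nat.gcd_mul_left, ← h1, ← hd, ← hg, mul_one]
    exact Nat.eq_of_mul_eq_mul_left hgpos h2
  set δ := ∑ c ∈ Cs, e' c with hδ
  obtain ⟨kC, hkC⟩ : ∃ k, Cs.card = k := ⟨_, rfl⟩
  refine ⟨d * (kC + d * (5 * δ + 4)) + (d * δ + 1), ?_⟩
  intro n K _ _ _ hK
  set s := q ^ n with hs
  have hs1 : 1 ≤ s := Nat.one_le_pow _ _ (by omega)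
  have hQ : Fintype.card K = s ^ 2 := by rw [hK, hs, ← pow_mul, mul_comm]
  have hsR : (1 : ℝ) ≤ (q : ℝ) ^ n := by exact_mod_cast hs1
  have hscast : ((s : ℕ) : ℝ) = (q : ℝ) ^ n := by simp [hs]
  obtain ⟨t, ht⟩ : d ∣ s - 1 := by
    have h1 : q - 1 ∣ q ^ n - 1 := by simpa using Nat.sub_dvd_pow_sub_pow q 1 n
    exact (Dvd.intro_left g hd.symm).trans h1
  have hst : s = d * t + 1 := by omega
  rw [← hscast]
  by_cases htδ : t ≤ δ
  · -- trivial bound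
    calc _ ≤ ∑ x : K, ‖χ (Algebra.norm F (∏ c ∈ Cs, (x + algebraMap F K c) ^ e c))‖ := norm_sum_le _ _
      _ ≤ ∑ x : K, (1 : ℝ) := Finset.sum_le_sum fun x _ => W_norm_le χ _
      _ = (s : ℝ) * s := by rw [Finset.sum_const, Finset.card_univ, hQ]; simp [sq]
      _ ≤ _ := by
        apply mul_le_mul_of_nonneg_right _ (by positivity)
        have : (s : ℝ) ≤ d * δ + 1 := by
          rw [hst]; exact_mod_cast Nat.add_le_add_right (Nat.mul_le_mul_left d htδ) 1
        have : (0 : ℝ) ≤ d * (kC + d * (5 * δ + 4)) := by positivity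
        linarith
  push Not at htδ
  set M := d * t ^ 2 + 2 * t with hM
  have hdM : d * M = Fintype.card K - 1 := by
    rw [hQ, hst, hM]
    have : (d * t + 1) ^ 2 = d * (d * t ^ 2 + 2 * t) + 1 := by ring
    omega
  have hinj : Function.Injective (algebraMap F K) := (algebraMap F K).injective
  set h : K[X] := ∏ c ∈ Cs, (X + C (algebraMap F K c)) ^ e' c with hh
  have hheval : ∀ x : K, h.eval x = ∏ c ∈ Cs, (x + algebraMap F K c) ^ e' c := by
    intro x; simp [hh, eval_prod]
  have hstep := W_stepanov d t δ M h hdpos (by rw [hQ, hst]) hM (by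
      rw [hheval, Finset.prod_ne_zero_iff]
      intro c hc
      apply pow_ne_zero
      rw [zero_add, Ne, map_eq_zero_iff _ hinj]
      rintro rfl; exact h0 hc)
    (W_nopow Cs (algebraMap F K) hinj e' d hcop) (by
      rw [hh]
      refine (natDegree_prod_le _ _).trans (Finset.sum_le_sum fun c _ => ?_)
      rw [natDegree_pow, natDegree_X_add_C, mul_one]) htδ
  have hnorm : ∀ x : K, algebraMap F K (Algebra.norm F (∏ c ∈ Cs, (x + algebraMap F K c) ^ e c))
      = h.eval x ^ M := by
    intro x
    rw [FiniteField.algebraMap_norm_eq_pow, hheval, Nat.card_eq_fintype_card, Nat.card_eq_fintype_card]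
    have h1 : (∏ c ∈ Cs, (x + algebraMap F K c) ^ e c) =
      (∏ c ∈ Cs, (x + algebraMap F K c) ^ e' c) ^ g := by
      rw [← Finset.prod_pow]
      refine Finset.prod_congr rfl fun c hc => ?_
      rw [hee' c hc, ← pow_mul, mul_comm]
    rw [h1, ← pow_mul]
    congr 1
    have h2 : q - 1 ∣ Fintype.card K - 1 := by
      rw [hK]; simpa using Nat.sub_dvd_pow_sub_pow q 1 (2 * n)
    obtain ⟨m, hm⟩ := h2
    rw [← hq, hm, Nat.mul_div_cancel_left _ (by omega)]
    rw [hm, hd] at hdM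
    apply Nat.eq_of_mul_eq_mul_left hdpos
    rw [hdM]; ring
  set N : K → F := fun x => Algebra.norm F (∏ c ∈ Cs, (x + algebraMap F K c) ^ e c) with hNdef
  set U := Finset.univ.filter (fun u : F => u ^ d = 1) with hU
  set nn : F → ℕ := fun u => (Finset.univ.filter (fun x : K => N x = u)).card with hnn
  have hNU : ∀ x : K, N x ∈ U ∨ h.eval x = 0 := by
    intro x
    by_cases hx : h.eval x = 0
    · exact Or.inr hx
    · left
      rw [hU, Finset.mem_filter]
      refine ⟨Finset.mem_univ _, hinj ?_⟩
      rw [map_pow, hnorm, ← pow_mul, mul_comm, hdM, FiniteField.pow_card_sub_one_eq_one _ hx, map_one]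
  have hMpos : M ≠ 0 := by
    have : 0 < t := by omega
    positivity
  have hN0 : ∀ x : K, h.eval x = 0 → N x = 0 := by
    intro x hx
    apply hinj
    rw [hnorm, hx, zero_pow hMpos, map_zero]
  have hU0 : (0 : F) ∉ U := by simp [hU, hdpos.ne']
  have hSum : ∑ x : K, χ (N x) = ∑ u ∈ U, χ u * (nn u : ℂ) := by
    have h1 : ∑ x : K, χ (N x) = ∑ x ∈ Finset.univ.filter (fun x => N x ∈ U), χ (N x) := by
      symm
      refine Finset.sum_subset (Finset.filter_subset _ _) ?_
      intro x _ hx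
      have : N x ∉ U := by simpa using hx
      rw [hN0 x ((hNU x).resolve_left this), MulChar.map_zero]
    rw [h1, ← Finset.sum_fiberwise_of_maps_to (s := Finset.univ.filter (fun x => N x ∈ U)) (t := U)
      (g := N) (by intro x hx; simpa using hx)]
    refine Finset.sum_congr rfl fun u hu => ?_
    rw [Finset.sum_congr rfl (g := fun _ => χ u) (by intro x hx; rw [(Finset.mem_filter.1 hx).2]),
      Finset.sum_const, nsmul_eq_mul, mul_comm]
    congr 3
    ext x
    simp only [Finset.mem_filter, Finset.mem_univ, true_and, and_iff_right_iff_imp]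
    rintro rfl; exact hu
  have hUcard : U.card ≤ d := by
    have h1 : U.card ≤ (nthRoots d (1 : F)).card := by
      refine (Finset.card_le_card (t := (nthRoots d (1 : F)).toFinset) ?_).trans (Multiset.toFinset_card_le _)
      intro x hx
      simp only [Multiset.mem_toFinset] at hx ⊢
      rw [mem_nthRoots hdpos]
      simpa [hU] using hx
    exact h1.trans (card_nthRoots _ _)
  have hdR : (0 : ℝ) < d := by exact_mod_cast hdpos
  have ht1 : (1 : ℝ) ≤ t := by exact_mod_cast (by omega : 1 ≤ t)
  have hd1R : (1 : ℝ) ≤ d := by exact_mod_cast hdpos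
  have hstR : (s : ℝ) = d * t + 1 := by exact_mod_cast hst
  have hmain := W_equi U χ (fun u _ => W_norm_le χ u) (W_sum_mu χ hord d g (by rw [mul_comm]; exact hd.symm) hd1)
    nn d hdpos hUcard ((s : ℝ) ^ 2) ((5 * δ + 4) * s) kC (by positivity) (by positivity) (by positivity)
    (by
      intro u _
      have h1 := hstep (algebraMap F K u)
      have h2 : (Finset.univ.filter (fun x : K => h.eval x ^ M = algebraMap F K u)) =
          Finset.univ.filter (fun x : K => N x = u) := by
        ext x
        simp only [Finset.mem_filter, Finset.mem_univ, true_and]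
        rw [← hnorm]
        exact hinj.eq_iff
      rw [h2, hQ] at h1
      have h3 : (nn u : ℝ) * (d * t) ≤ δ * (d * t) + (s : ℝ) ^ 2 * (t + 2 * δ + 2) := by exact_mod_cast h1
      have hdt : (1 : ℝ) ≤ d * t := by nlinarith
      have h4 : (nn u : ℝ) * (d * t) ≤ ((s : ℝ) ^ 2 / d + (5 * δ + 4) * s) * (d * t) := by
        refine h3.trans ?_
        have h5 : ((s : ℝ) ^ 2 / d + (5 * δ + 4) * s) * (d * t) = (s : ℝ) ^ 2 * t + (5 * δ + 4) * s * (d * t) := by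
          field_simp
        rw [h5, hstR]
        have hδ0 : (0 : ℝ) ≤ δ := by positivity
        set w : ℝ := d * t
        nlinarith [mul_nonneg hδ0 (by linarith : (0:ℝ) ≤ w - 1), mul_nonneg (mul_nonneg hδ0 (by linarith : (0:ℝ) ≤ w - 1)) (by linarith : (0:ℝ) ≤ w), mul_nonneg (by linarith : (0:ℝ) ≤ w - 1) (by linarith : (0:ℝ) ≤ w)]
      exact le_of_mul_le_mul_right h4 (by linarith))
    (by
      have h1 : ∑ u ∈ U, nn u = (Finset.univ.filter (fun x => N x ∈ U)).card := by
        rw [Finset.card_eq_sum_card_fiberwise (s := Finset.univ.filter (fun x => N x ∈ U)) (t := U) (f := N)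
          (by intro x hx; simpa using hx)]
        refine Finset.sum_congr rfl fun u hu => ?_
        change (Finset.univ.filter (fun x : K => N x = u)).card = _
        congr 1
        ext x
        simp only [Finset.mem_filter, Finset.mem_univ, true_and]
        constructor
        · rintro rfl; exact ⟨hu, rfl⟩
        · exact fun h => h.2
      have h2 : (Finset.univ.filter (fun x => ¬ N x ∈ U)).card ≤ kC := by
        rw [← hkC]
        refine (Finset.card_le_card (t := Cs.image (fun c => - algebraMap F K c)) ?_).trans Finset.card_image_le
        intro x hx
        have h3 : N x ∉ U := by simpa using hx
        have h4 := (hNU x).resolve_left h3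
        rw [hheval, Finset.prod_eq_zero_iff] at h4
        obtain ⟨c, hc, h5⟩ := h4
        rw [Finset.mem_image]
        exact ⟨c, hc, (eq_neg_of_add_eq_zero_left (pow_eq_zero_iff (M₀ := K) (fun h => by simp [h] at h5) |>.1 h5)).symm⟩
      have h6 := Finset.card_filter_add_card_filter_not (s := (Finset.univ : Finset K)) (fun x => N x ∈ U)
      rw [Finset.card_univ, hQ, ← h1] at h6
      have h7 : s ^ 2 ≤ ∑ u ∈ U, nn u + kC := by omega
      have h8 : ((s : ℝ)) ^ 2 ≤ ∑ u ∈ U, (nn u : ℝ) + kC := by exact_mod_cast h7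
      linarith)
  rw [hSum]
  refine hmain.trans ?_
  have hs1R : (1 : ℝ) ≤ s := by exact_mod_cast hs1
  have hC0 : (0 : ℝ) ≤ kC := by positivity
  have h1 : (kC : ℝ) ≤ kC * s := le_mul_of_one_le_right hC0 hs1R
  have h2 : (d : ℝ) * (kC + d * ((5 * δ + 4) * s)) ≤ d * (kC * s + d * ((5 * δ + 4) * s)) := by
    gcongr
  have h3 : (0 : ℝ) ≤ (d * δ + 1) * s := by positivity
  calc _ ≤ _ := h2
    _ = (d * (kC + d * (5 * δ + 4))) * s := by ring
    _ ≤ _ := by rw [add_mul]; linarith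

lemma W_newton (a s : ℕ → ℂ) (m : ℕ) (ha0 : a 0 = 1) (han : ∀ n, m < n → a n = 0)
    (hrec : ∀ n : ℕ, (n : ℂ) * a n = ∑ x ∈ antidiagonal n with x.1 < n, a x.1 * s x.2) :
    ∃ α : Fin m → ℂ, ∀ k, 1 ≤ k → s k = - ∑ i, α i ^ k := by
  classical
  set R : Polynomial ℂ := ∑ n ∈ Finset.range (m+1), Polynomial.monomial (m - n) (a n) with hR
  have hco : ∀ n, n ≤ m → R.coeff (m - n) = a n := by
    intro n hn
    rw [hR, Polynomial.finsetSum_coeff, Finset.sum_eq_single n]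
    · simp
    · intro b hb hbn
      rw [Polynomial.coeff_monomial, if_neg]
      have := Finset.mem_range.1 hb
      omega
    · intro h; exact absurd (Finset.mem_range.2 (by omega)) h
  have hdeg : R.natDegree ≤ m := by
    apply Polynomial.natDegree_sum_le_of_forall_le
    intro i hi
    exact (Polynomial.natDegree_monomial_le _).trans (Nat.sub_le _ _)
  have hcm : R.coeff m = 1 := by rw [← ha0, ← hco 0 (Nat.zero_le _)]; simp
  have hmon : R.Monic := Polynomial.monic_of_natDegree_le_of_coeff_eq_one m hdeg hcm
  have hdm : R.natDegree = m :=
    le_antisymm hdeg (Polynomial.le_natDegree_of_ne_zero (by rw [hcm]; exact one_ne_zero))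
  have hcard : Multiset.card R.roots = R.natDegree :=
    (IsAlgClosed.splits R).natDegree_eq_card_roots.symm
  have hlen : R.roots.toList.length = m := by rw [Multiset.length_toList, hcard, hdm]
  obtain ⟨α, hα⟩ : ∃ α : Fin m → ℂ, Finset.univ.val.map α = R.roots := by
    refine ⟨fun i => R.roots.toList.get (i.cast hlen.symm), ?_⟩
    rw [Fin.univ_val_map]
    conv_rhs => rw [← Multiset.coe_toList R.roots]
    congr 1
    apply List.ext_get
    · simp [hlen]
    · intro n h1 h2; simp
  have hes : ∀ n, a n = (-1)^n * (Finset.univ.val.map α).esymm n := by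
    intro n
    by_cases hn : n ≤ m
    · have := Polynomial.coeff_eq_esymm_roots_of_card hcard (k := m - n) (by omega)
      rw [hco n hn, hmon.leadingCoeff, hdm, Nat.sub_sub_self hn, one_mul, ← hα] at this
      exact this
    · rw [han n (by omega), Multiset.esymm, Multiset.powersetCard_eq_empty]
      · simp
      · simp; omega
  have hnew : ∀ n : ℕ, (n : ℂ) * a n =
      - ∑ x ∈ antidiagonal n with x.1 < n, a x.1 * ∑ i, α i ^ x.2 := by
    intro n
    have h := congrArg (MvPolynomial.aeval α) (MvPolynomial.mul_esymm_eq_sum (Fin m) ℂ n)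
    simp only [map_mul, map_natCast, map_pow, map_neg, map_one, map_sum,
      MvPolynomial.aeval_esymm_eq_multiset_esymm, MvPolynomial.psum, MvPolynomial.aeval_X] at h
    rw [hes n, mul_left_comm, h, ← mul_assoc, ← pow_add]
    have : (-1:ℂ)^(n + (n+1)) = -1 := by rw [← add_assoc, pow_succ, ← two_mul, pow_mul]; simp
    rw [this, neg_one_mul]
    congr 1
    apply Finset.sum_congr rfl
    intro x hx
    rw [hes x.1]
  refine ⟨α, ?_⟩
  intro k
  induction k using Nat.strong_induction_on with
  | _ k ih =>
    intro hk
    have h := (hrec k).symm.trans (hnew k)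
    rw [← Finset.sum_neg_distrib] at h
    have hmem : ((0, k) : ℕ × ℕ) ∈ (antidiagonal k).filter (fun x => x.1 < k) := by
      simp; omega
    rw [← Finset.add_sum_erase _ _ hmem, ← Finset.add_sum_erase _ _ hmem] at h
    have he : ∑ x ∈ ((antidiagonal k).filter (fun x => x.1 < k)).erase (0, k), a x.1 * s x.2 =
      ∑ x ∈ ((antidiagonal k).filter (fun x => x.1 < k)).erase (0, k), -(a x.1 * ∑ i, α i ^ x.2) := by
      apply Finset.sum_congr rfl
      rintro ⟨u, v⟩ hx
      simp only [mem_erase, ne_eq, Prod.mk.injEq, not_and, mem_filter, HasAntidiagonal.mem_antidiagonal] at hx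
      have : u ≠ 0 := by
        rintro rfl
        exact hx.1 rfl (by omega)
      simp only
      rw [ih v (by omega) (by omega), mul_neg]
    rw [he] at h
    have := add_right_cancel h
    simpa [ha0] using this

lemma W_limit (N : ℕ) (β : Fin N → ℂ) (A q : ℝ) (hq : 0 < q)
    (h : ∀ n : ℕ, 1 ≤ n → ‖∑ i, β i ^ n‖ ≤ A * q ^ n) (i0 : Fin N) : ‖β i0‖ ≤ q := by
  classical
  by_contra hlt
  push Not at hlt
  have hu : ∀ i, ∃ u : Circle, β i = ‖β i‖ * (u : ℂ) := by
    intro i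
    by_cases hb : β i = 0
    · exact ⟨1, by simp [hb]⟩
    · refine ⟨Circle.exp (Complex.arg (β i)), ?_⟩
      have := Complex.norm_mul_exp_arg_mul_I (β i)
      rw [Circle.coe_exp, this]
  choose u hu using hu
  have hc := mapClusterPt_one_atTop_pow u
  have hnb : {v : Fin N → Circle | ∀ i, (1/2 : ℝ) < (v i : ℂ).re} ∈ nhds (1 : Fin N → Circle) := by
    have : {v : Fin N → Circle | ∀ i, (1/2 : ℝ) < (v i : ℂ).re} =
      ⋂ i, {v : Fin N → Circle | (1/2 : ℝ) < (v i : ℂ).re} := by ext; simp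
    rw [this]
    apply IsOpen.mem_nhds
    · apply isOpen_iInter_of_finite
      intro i
      apply isOpen_lt continuous_const
      exact Complex.continuous_re.comp (continuous_subtype_val.comp (continuous_apply i))
    · simp; norm_num
  have hfr := hc.frequently hnb
  have htend : Filter.Tendsto (fun n : ℕ => (‖β i0‖ / q) ^ n) Filter.atTop Filter.atTop :=
    tendsto_pow_atTop_atTop_of_one_lt ((one_lt_div hq).2 hlt)
  have hev := (htend.eventually_gt_atTop (2 * A)).and (Filter.eventually_ge_atTop 1)
  obtain ⟨n, hn1, hn2, hn3⟩ := (hfr.and_eventually hev).exists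
  have h1 := h n hn3
  have h2 : (∑ i, β i ^ n).re ≥ ∑ i, (1/2) * ‖β i‖ ^ n := by
    rw [Complex.re_sum]
    apply Finset.sum_le_sum
    intro i _
    have hi := hn1 i
    conv_rhs => rw [hu i]
    rw [mul_pow, ← Complex.ofReal_pow, Complex.re_ofReal_mul]
    have : (1/2 : ℝ) < ((u i : ℂ) ^ n).re := by simpa using hi
    nlinarith [pow_nonneg (norm_nonneg (β i)) n]
  have h3 : (1/2) * ‖β i0‖ ^ n ≤ ∑ i, (1/2) * ‖β i‖ ^ n :=
    Finset.single_le_sum (f := fun i => (1/2) * ‖β i‖ ^ n) (fun i _ => by positivity) (mem_univ i0)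
  have h4 := Complex.re_le_norm (∑ i, β i ^ n)
  rw [div_pow, lt_div_iff₀ (by positivity)] at hn2
  linarith

noncomputable def WMon (F : Type*) [Field F] [Fintype F] (n : ℕ) : Finset (Polynomial F) := by
  classical
  exact (Finset.univ : Finset (Fin n → F)).image (fun c => Polynomial.X ^ n + Polynomial.ofFn n c)

lemma W_mem_mon {F : Type*} [Field F] [Fintype F] {n : ℕ} {g : Polynomial F} :
    g ∈ WMon F n ↔ g.Monic ∧ g.natDegree = n := by
  classical
  unfold WMon
  simp only [mem_image, mem_univ, true_and]
  constructor
  · rintro ⟨c, rfl⟩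
    have hd := Polynomial.ofFn_degree_lt c
    refine ⟨Polynomial.monic_X_pow_add hd, ?_⟩
    apply Polynomial.natDegree_eq_of_degree_eq_some
    rw [Polynomial.degree_add_eq_left_of_degree_lt]
    · simp
    · simpa using hd
  · rintro ⟨hm, hn⟩
    refine ⟨Polynomial.toFn n g, ?_⟩
    ext i
    rw [Polynomial.coeff_add, Polynomial.coeff_X_pow]
    rcases lt_trichotomy i n with h | h | h
    · rw [Polynomial.ofFn_coeff_eq_val_of_lt _ h, if_neg h.ne]
      simp [Polynomial.toFn]
    · subst h
      rw [Polynomial.ofFn_coeff_eq_zero_of_ge _ le_rfl, if_pos rfl, ← hn]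
      simp [hm.coeff_natDegree]
    · rw [Polynomial.ofFn_coeff_eq_zero_of_ge _ h.le, if_neg h.ne',
        Polynomial.coeff_eq_zero_of_natDegree_lt (by omega)]
      simp

noncomputable def WIr (F : Type*) [Field F] [Fintype F] (n : ℕ) : Finset (Polynomial F) := by
  classical
  exact (WMon F n).filter Irreducible

lemma W_mem_ir {F : Type*} [Field F] [Fintype F] {n : ℕ} {g : Polynomial F} :
    g ∈ WIr F n ↔ g.Monic ∧ g.natDegree = n ∧ Irreducible g := by
  classical
  unfold WIr
  rw [mem_filter, W_mem_mon, and_assoc]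

lemma W_deg_ident {F : Type*} [Field F] [Fintype F] {n : ℕ} {g : Polynomial F}
    (hg : g.Monic) (hn : g.natDegree = n) [∀ P : Polynomial F, ∀ j, Decidable (P ^ j ∣ g)] :
    n = ∑ d ∈ Icc 1 n, ∑ j ∈ Icc 1 n, ∑ P ∈ WIr F d, (if P ^ j ∣ g then d else 0) := by
  classical
  have hg0 : g ≠ 0 := hg.ne_zero
  set nf := UniqueFactorizationMonoid.normalizedFactors g with hnf
  have hprod : nf.prod = g := by
    have h1 := UniqueFactorizationMonoid.prod_normalizedFactors_eq hg0
    rw [hg.normalize_eq_self] at h1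
    exact h1
  have hnfm : ∀ P ∈ nf, P.Monic ∧ Irreducible P := by
    intro P hP
    have hi := UniqueFactorizationMonoid.irreducible_of_normalized_factor P hP
    refine ⟨?_, hi⟩
    have := UniqueFactorizationMonoid.normalize_normalized_factor P hP
    rw [← this]
    exact Polynomial.monic_normalize hi.ne_zero
  have hdeg : g.natDegree = ∑ P ∈ nf.toFinset, nf.count P * P.natDegree := by
    conv_lhs => rw [← hprod]
    rw [Polynomial.natDegree_multiset_prod_of_monic _ (fun P hP => (hnfm P hP).1),
      Finset.sum_multiset_map_count]
    simp
  have hcount : ∀ P : Polynomial F, P.Monic → Irreducible P → ∀ j,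
      (P ^ j ∣ g ↔ j ≤ nf.count P) := by
    intro P hP hi j
    rw [Multiset.le_count_iff_replicate_le, pow_dvd_iff_le_emultiplicity,
      UniqueFactorizationMonoid.le_emultiplicity_iff_replicate_le_normalizedFactors hi hg0,
      hP.normalize_eq_self]
  have hcle : ∀ P : Polynomial F, P.Monic → Irreducible P → nf.count P ≤ n := by
    intro P hP hi
    have h1 := (hcount P hP hi _).2 le_rfl
    have h2 := Polynomial.natDegree_le_of_dvd h1 hg0
    rw [Polynomial.natDegree_pow, hn] at h2
    have h3 := hi.natDegree_pos
    nlinarith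
  have hsum : ∀ d ∈ Icc 1 n, ∑ j ∈ Icc 1 n, ∑ P ∈ WIr F d, (if P ^ j ∣ g then d else 0) =
      ∑ P ∈ WIr F d, nf.count P * P.natDegree := by
    intro d hd
    rw [Finset.sum_comm]
    apply Finset.sum_congr rfl
    intro P hP
    obtain ⟨hPm, hPd, hPi⟩ := W_mem_ir.1 hP
    have : ∀ j ∈ Icc 1 n, (if P ^ j ∣ g then d else 0) = if j ≤ nf.count P then d else 0 := by
      intro j _
      simp only [hcount P hPm hPi j]
    rw [Finset.sum_congr rfl this, ← Finset.sum_filter, Finset.sum_const, hPd]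
    have : (Icc 1 n).filter (fun j => j ≤ nf.count P) = Icc 1 (nf.count P) := by
      ext j
      have := hcle P hPm hPi
      simp only [mem_filter, mem_Icc]
      omega
    rw [this]; simp
  rw [Finset.sum_congr rfl hsum, ← Finset.sum_biUnion]
  · conv_lhs => rw [← hn, hdeg]
    apply Finset.sum_subset
    · intro P hP
      have hP' := Multiset.mem_toFinset.1 hP
      have h1 := hnfm P hP'
      rw [mem_biUnion]
      refine ⟨P.natDegree, ?_, W_mem_ir.2 ⟨h1.1, rfl, h1.2⟩⟩
      rw [mem_Icc]
      refine ⟨h1.2.natDegree_pos, ?_⟩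
      rw [← hn]
      exact Polynomial.natDegree_le_of_dvd
        (UniqueFactorizationMonoid.dvd_of_mem_normalizedFactors hP') hg0
    · intro P _ hP
      rw [Multiset.mem_toFinset, ← Multiset.count_eq_zero] at hP
      rw [hP, zero_mul]
  · intro d _ d' _ hdd
    rw [Function.onFun, Finset.disjoint_left]
    intro P h1 h2
    exact hdd ((W_mem_ir.1 h1).2.1.symm.trans (W_mem_ir.1 h2).2.1)

lemma W_mul_sum {F : Type*} [Field F] [Fintype F] (XX : Polynomial F → ℂ)
    (hmul : ∀ g h : Polynomial F, g.Monic → h.Monic → XX (g * h) = XX g * XX h)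
    (n : ℕ) (Q : Polynomial F) (hQ : Q.Monic) [∀ g : Polynomial F, Decidable (Q ∣ g)] :
    ∑ g ∈ WMon F n, (if Q ∣ g then XX g else 0) =
      if Q.natDegree ≤ n then XX Q * ∑ g ∈ WMon F (n - Q.natDegree), XX g else 0 := by
  classical
  rw [← Finset.sum_filter]
  split_ifs with h
  · rw [Finset.mul_sum]
    symm
    apply Finset.sum_bij (fun g _ => Q * g)
    · intro g hg
      have := W_mem_mon.1 hg
      rw [mem_filter, W_mem_mon]
      refine ⟨⟨hQ.mul this.1, ?_⟩, dvd_mul_right _ _⟩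
      rw [hQ.natDegree_mul this.1, this.2]; omega
    · intro g _ g' _ hgg
      exact mul_left_cancel₀ hQ.ne_zero hgg
    · intro g hg
      rw [mem_filter, W_mem_mon] at hg
      obtain ⟨⟨hm, hn⟩, f, rfl⟩ := hg
      have hf : f.Monic := hQ.of_mul_monic_left hm
      refine ⟨f, W_mem_mon.2 ⟨hf, ?_⟩, rfl⟩
      rw [hQ.natDegree_mul hf] at hn; omega
    · intro g hg
      exact (hmul _ _ hQ (W_mem_mon.1 hg).1).symm
  · apply Finset.sum_eq_zero
    intro g hg
    rw [mem_filter, W_mem_mon] at hg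
    have := Polynomial.natDegree_le_of_dvd hg.2 hg.1.1.ne_zero
    omega

lemma W_rec {F : Type*} [Field F] [Fintype F] (XX : Polynomial F → ℂ) (h1 : XX 1 = 1)
    (hmul : ∀ g h : Polynomial F, g.Monic → h.Monic → XX (g * h) = XX g * XX h) (n : ℕ) :
    (n : ℂ) * ∑ g ∈ WMon F n, XX g = ∑ x ∈ antidiagonal n with x.1 < n,
      (∑ g ∈ WMon F x.1, XX g) *
        ∑ p ∈ x.2.divisorsAntidiagonal, ∑ P ∈ WIr F p.1, (p.1 : ℂ) * XX P ^ p.2 := by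
  classical
  have hpow : ∀ P : Polynomial F, P.Monic → ∀ j : ℕ, XX (P ^ j) = XX P ^ j := by
    intro P hP j
    induction j with
    | zero => simp [h1]
    | succ j ih => rw [pow_succ, hmul _ _ (hP.pow j) hP, ih, pow_succ]
  have hL : (n : ℂ) * ∑ g ∈ WMon F n, XX g = ∑ d ∈ Icc 1 n, ∑ j ∈ Icc 1 n, ∑ P ∈ WIr F d,
      (d : ℂ) * ∑ g ∈ WMon F n, (if P ^ j ∣ g then XX g else 0) := by
    rw [Finset.mul_sum]
    simp only [Finset.mul_sum]
    have : ∀ g ∈ WMon F n, (n : ℂ) * XX g = ∑ d ∈ Icc 1 n, ∑ j ∈ Icc 1 n, ∑ P ∈ WIr F d,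
        (d : ℂ) * (if P ^ j ∣ g then XX g else 0) := by
      intro g hg
      have hg' := W_mem_mon.1 hg
      have h := congrArg (Nat.cast : ℕ → ℂ) (W_deg_ident hg'.1 hg'.2)
      push_cast at h
      rw [h]
      simp only [Finset.sum_mul]
      apply Finset.sum_congr rfl; intro d _
      apply Finset.sum_congr rfl; intro j _
      apply Finset.sum_congr rfl; intro P _
      split_ifs <;> simp
    rw [Finset.sum_congr rfl this, Finset.sum_comm]
    apply Finset.sum_congr rfl; intro d _
    rw [Finset.sum_comm]
    apply Finset.sum_congr rfl; intro j _
    rw [Finset.sum_comm]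
  set f : ℕ × ℕ → ℂ := fun p => ∑ P ∈ WIr F p.1, (p.1 : ℂ) * XX P ^ p.2 with hf
  set a : ℕ → ℂ := fun m => ∑ g ∈ WMon F m, XX g with ha
  have hL2 : (n : ℂ) * a n = ∑ p ∈ (Icc 1 n ×ˢ Icc 1 n).filter (fun p => p.1 * p.2 ≤ n),
      f p * a (n - p.1 * p.2) := by
    rw [ha]
    simp only
    rw [hL, ← Finset.sum_product', Finset.sum_filter]
    apply Finset.sum_congr rfl
    rintro ⟨d, j⟩ _
    have : ∀ P ∈ WIr F d, (d : ℂ) * ∑ g ∈ WMon F n, (if P ^ j ∣ g then XX g else 0) =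
      if d * j ≤ n then (d : ℂ) * XX P ^ j * a (n - d * j) else 0 := by
      intro P hP
      obtain ⟨hPm, hPd, hPi⟩ := W_mem_ir.1 hP
      rw [W_mul_sum XX hmul n (P ^ j) (hPm.pow j), Polynomial.natDegree_pow, hPd, mul_comm j d,
        hpow P hPm]
      split_ifs
      · rw [ha, mul_assoc]
      · simp
    simp only
    rw [Finset.sum_congr rfl this]
    split_ifs
    · rw [hf, Finset.sum_mul]
    · simp
  change (n : ℂ) * a n = ∑ x ∈ antidiagonal n with x.1 < n, a x.1 * ∑ p ∈ x.2.divisorsAntidiagonal, f p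
  rw [hL2]
  rw [← Finset.sum_fiberwise_of_maps_to (s := (Icc 1 n ×ˢ Icc 1 n).filter (fun p => p.1 * p.2 ≤ n))
    (t := (antidiagonal n).filter (fun x => x.1 < n)) (g := fun p => (n - p.1 * p.2, p.1 * p.2))]
  · apply Finset.sum_congr rfl
    rintro ⟨u, v⟩ hx
    simp only [mem_filter, HasAntidiagonal.mem_antidiagonal] at hx
    rw [Finset.mul_sum]
    simp only
    have : ((Icc 1 n ×ˢ Icc 1 n).filter (fun p => p.1 * p.2 ≤ n)).filter
        (fun p => (n - p.1 * p.2, p.1 * p.2) = (u, v)) = v.divisorsAntidiagonal := by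
      ext ⟨d, j⟩
      simp only [mem_filter, mem_product, mem_Icc, Prod.mk.injEq, Nat.mem_divisorsAntidiagonal]
      constructor
      · rintro ⟨_, _, h⟩
        exact ⟨h, by omega⟩
      · rintro ⟨h, hv⟩
        have hd : 0 < d := Nat.pos_of_ne_zero (by rintro rfl; simp at h; omega)
        have hj : 0 < j := Nat.pos_of_ne_zero (by rintro rfl; simp at h; omega)
        have h3 : d ≤ d * j := Nat.le_mul_of_pos_right d hj
        have h4 : j ≤ d * j := Nat.le_mul_of_pos_left j hd
        omega
    rw [this]
    apply Finset.sum_congr rfl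
    rintro ⟨d, j⟩ hdj
    have h := (Nat.mem_divisorsAntidiagonal.1 hdj).1
    simp only at h
    simp only
    rw [h, mul_comm]
    congr 2
    omega
  · rintro ⟨d, j⟩ hp
    simp only [mem_filter, mem_product, mem_Icc] at hp
    have : 0 < d * j := Nat.mul_pos (by omega) (by omega)
    simp only [mem_filter, HasAntidiagonal.mem_antidiagonal]
    omega

noncomputable def WX {F : Type*} [Field F] [Fintype F] (χ : MulChar F ℂ) (Cs : Finset F) (e : F → ℕ)
    (g : Polynomial F) : ℂ :=
  χ (∏ c ∈ Cs, ((-1) ^ g.natDegree * g.eval (-c)) ^ e c)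

lemma W_X_one {F : Type*} [Field F] [Fintype F] (χ : MulChar F ℂ) (Cs : Finset F) (e : F → ℕ) :
    WX χ Cs e 1 = 1 := by
  simp [WX]

lemma W_X_mul {F : Type*} [Field F] [Fintype F] (χ : MulChar F ℂ) (Cs : Finset F) (e : F → ℕ)
    (g h : Polynomial F) (hg : g.Monic) (hh : h.Monic) :
    WX χ Cs e (g * h) = WX χ Cs e g * WX χ Cs e h := by
  unfold WX
  rw [← map_mul, ← Finset.prod_mul_distrib]
  congr 1
  apply Finset.prod_congr rfl
  intro c _
  rw [← mul_pow, hg.natDegree_mul hh, Polynomial.eval_mul, pow_add]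
  ring

lemma W_mon_zero {F : Type*} [Field F] [Fintype F] (χ : MulChar F ℂ) (Cs : Finset F) (e : F → ℕ) :
    ∑ g ∈ WMon F 0, WX χ Cs e g = 1 := by
  have : WMon F 0 = {1} := by
    ext g
    rw [W_mem_mon, mem_singleton]
    constructor
    · rintro ⟨h1, h2⟩
      exact Polynomial.eq_one_of_monic_natDegree_zero h1 h2
    · rintro rfl
      exact ⟨Polynomial.monic_one, Polynomial.natDegree_one⟩
  rw [this, sum_singleton, W_X_one]

lemma W_mon_one {F : Type*} [Field F] [Fintype F] (χ : MulChar F ℂ) (Cs : Finset F) (e : F → ℕ) :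
    ∑ g ∈ WMon F 1, WX χ Cs e g = ∑ x : F, χ (∏ c ∈ Cs, (x + c) ^ e c) := by
  classical
  symm
  apply Finset.sum_bij (fun x _ => Polynomial.X - Polynomial.C x)
  · intro x _
    exact W_mem_mon.2 ⟨Polynomial.monic_X_sub_C x, Polynomial.natDegree_X_sub_C x⟩
  · intro x _ y _ h
    simpa using h
  · intro g hg
    obtain ⟨hm, hn⟩ := W_mem_mon.1 hg
    refine ⟨-g.coeff 0, mem_univ _, ?_⟩
    have := hm.eq_X_add_C hn
    rw [Polynomial.C_neg, sub_neg_eq_add]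
    exact this.symm
  · intro x _
    unfold WX
    congr 1
    apply Finset.prod_congr rfl
    intro c _
    simp

lemma W_vanish {F : Type*} [Field F] [Fintype F] (χ : MulChar F ℂ)
    (hord : orderOf χ = Fintype.card F - 1)
    (Cs : Finset F) (e : F → ℕ) (c0 : F) (hc0 : c0 ∈ Cs) (he0 : ¬ (Fintype.card F - 1) ∣ e c0)
    (n : ℕ) (hn : Cs.card ≤ n) : ∑ g ∈ WMon F n, WX χ Cs e g = 0 := by
  classical
  have hne : χ ^ (e c0) ≠ 1 := by
    rw [Ne, ← orderOf_dvd_iff_pow_eq_one, hord]; exact he0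
  obtain ⟨v, hv⟩ := MulChar.ne_one_iff.1 hne
  rw [MulChar.pow_apply_coe] at hv
  set l : Polynomial F := Lagrange.basis Cs (fun c => -c) c0 with hl
  have hinj : Set.InjOn (fun c : F => -c) Cs := fun x _ y _ h => neg_injective h
  have hl0 : l.eval (-c0) = 1 := Lagrange.eval_basis_self hinj hc0
  have hl1 : ∀ c ∈ Cs, c ≠ c0 → l.eval (-c) = 0 := by
    intro c hc hcc
    exact Lagrange.eval_basis_of_ne hcc.symm hc
  have hld : l.degree < n := by
    rw [hl, Lagrange.degree_basis hinj hc0]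
    have := Finset.card_pos.2 ⟨c0, hc0⟩
    exact_mod_cast (by omega : Cs.card - 1 < n)
  set φ : F → Polynomial F → Polynomial F :=
    fun w g => g + Polynomial.C ((w - 1) * g.eval (-c0)) * l with hφ
  have hφm : ∀ w g, g ∈ WMon F n → φ w g ∈ WMon F n := by
    intro w g hg
    obtain ⟨hm, hd⟩ := W_mem_mon.1 hg
    have hlt : (Polynomial.C ((w - 1) * g.eval (-c0)) * l).degree < g.degree := by
      rw [Polynomial.degree_eq_natDegree hm.ne_zero, hd]
      exact (by rw [← Polynomial.smul_eq_C_mul]; exact Polynomial.degree_smul_le _ _ : (Polynomial.C ((w - 1) * g.eval (-c0)) * l).degree ≤ l.degree).trans_lt hld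
    rw [W_mem_mon]
    refine ⟨hm.add_of_left hlt, ?_⟩
    rw [hφ]; simp only
    rw [Polynomial.natDegree_add_eq_left_of_degree_lt hlt, hd]
  have hev0 : ∀ w g, (φ w g).eval (-c0) = w * g.eval (-c0) := by
    intro w g
    simp [hφ, hl0]; ring
  have hev1 : ∀ w g, ∀ c ∈ Cs, c ≠ c0 → (φ w g).eval (-c) = g.eval (-c) := by
    intro w g c hc hcc
    simp [hφ, hl1 c hc hcc]
  have hinv : ∀ w w' g, w' * w = 1 → φ w' (φ w g) = g := by
    intro w w' g hw
    have : φ w' (φ w g) = φ w g + Polynomial.C ((w' - 1) * (φ w g).eval (-c0)) * l := rfl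
    rw [this, hev0, hφ]
    simp only
    rw [add_assoc, ← add_mul, ← Polynomial.C_add]
    have : (w - 1) * g.eval (-c0) + (w' - 1) * (w * g.eval (-c0)) = 0 := by
      linear_combination g.eval (-c0) * hw
    rw [this]; simp
  have hX : ∀ g ∈ WMon F n, WX χ Cs e (φ v g) = χ v ^ e c0 * WX χ Cs e g := by
    intro g hg
    unfold WX
    rw [(W_mem_mon.1 hg).2, (W_mem_mon.1 (hφm v g hg)).2, ← map_pow, ← map_mul]
    congr 1
    rw [← Finset.mul_prod_erase _ _ hc0, ← Finset.mul_prod_erase _ _ hc0, hev0,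
      ← mul_assoc ((v : F) ^ e c0), ← mul_pow]
    congr 1
    · congr 1; ring
    · apply Finset.prod_congr rfl
      intro c hc
      rw [hev1 _ _ c (mem_of_mem_erase hc) (ne_of_mem_erase hc)]
  have hsum : ∑ g ∈ WMon F n, WX χ Cs e (φ v g) = ∑ g ∈ WMon F n, WX χ Cs e g := by
    apply Finset.sum_nbij' (φ v) (φ (v⁻¹ : Fˣ))
    · exact fun g hg => hφm _ g hg
    · exact fun g hg => hφm _ g hg
    · exact fun g hg => hinv _ _ g (by simp)
    · exact fun g hg => hinv _ _ g (by simp)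
    · exact fun g hg => rfl
  rw [Finset.sum_congr rfl hX, ← Finset.mul_sum] at hsum
  have : (χ v ^ e c0 - 1) * ∑ g ∈ WMon F n, WX χ Cs e g = 0 := by
    rw [sub_mul, hsum]; ring
  rcases mul_eq_zero.1 this with h | h
  · exact absurd (sub_eq_zero.1 h) hv
  · exact h

lemma W_norm_coeff {F K : Type*} [Field F] [Field K] [Algebra F K] [FiniteDimensional F K] (y : K) :
    Algebra.norm F y = ((-1) ^ (minpoly F y).natDegree * (minpoly F y).coeff 0) ^
      (Module.finrank F K / (minpoly F y).natDegree) := by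
  have hy : IsIntegral F y := Algebra.IsIntegral.isIntegral y
  rw [Algebra.norm_eq_norm_adjoin]
  have h1 := Algebra.PowerBasis.norm_gen_eq_coeff_zero_minpoly (IntermediateField.adjoin.powerBasis hy)
  rw [IntermediateField.adjoin.powerBasis_gen, IntermediateField.minpoly_gen,
    IntermediateField.adjoin.powerBasis_dim] at h1
  rw [h1]
  congr 1
  have h2 := Module.finrank_mul_finrank F (IntermediateField.adjoin F {y}) K
  rw [IntermediateField.adjoin.finrank hy] at h2
  rw [← h2, Nat.mul_div_cancel_left _ (minpoly.natDegree_pos hy)]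

lemma W_norm_shift {F K : Type*} [Field F] [Field K] [Algebra F K] [FiniteDimensional F K] (x : K) (c : F) :
    Algebra.norm F (x + algebraMap F K c) =
     ((-1) ^ (minpoly F x).natDegree * (minpoly F x).eval (-c)) ^
      (Module.finrank F K / (minpoly F x).natDegree) := by
  rw [W_norm_coeff, minpoly.add_algebraMap, Polynomial.natDegree_comp, Polynomial.natDegree_X_sub_C,
    mul_one, Polynomial.coeff_zero_eq_eval_zero, Polynomial.eval_comp]
  simp

lemma W_fib {F K : Type*} [Field F] [Fintype F] [Field K] [Fintype K] [Algebra F K] (k : ℕ)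
    (hk : Fintype.card K = Fintype.card F ^ k) (P : Polynomial F) (hP : P.Monic)
    (hPi : Irreducible P) (hd : P.natDegree ∣ k) [DecidableEq (Polynomial F)] :
    ((Finset.univ : Finset K).filter (fun x => minpoly F x = P)).card = P.natDegree := by
  classical
  have hsplit : (P.map (algebraMap F K)).Splits := by
    have h1 := (hPi.natDegree_dvd_iff_dvd_X_pow_card_pow_sub_X (n := k)).1 hd
    have h2 := Polynomial.map_dvd (algebraMap F K) h1
    rw [Nat.card_eq_fintype_card, ← hk] at h2
    simp only [Polynomial.map_sub, Polynomial.map_pow, Polynomial.map_X] at h2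
    refine Polynomial.Splits.of_dvd ?_ ?_ h2
    · rw [Polynomial.splits_iff_card_roots, FiniteField.roots_X_pow_card_sub_X,
        FiniteField.X_pow_card_sub_X_natDegree_eq _ Fintype.one_lt_card]
      rfl
    · exact FiniteField.X_pow_card_sub_X_ne_zero _ Fintype.one_lt_card
  have hsep : P.Separable := PerfectField.separable_of_irreducible hPi
  rw [← Polynomial.card_rootSet_eq_natDegree hsep hsplit, ← Set.toFinset_card]
  congr 1
  ext x
  rw [Set.mem_toFinset, Polynomial.mem_rootSet_of_ne hP.ne_zero, mem_filter]
  constructor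
  · rintro ⟨_, rfl⟩
    exact minpoly.aeval F x
  · intro h
    exact ⟨mem_univ _, (minpoly.eq_of_irreducible_of_monic hPi h hP).symm⟩

lemma W_ext_sum {F K : Type*} [Field F] [Fintype F] [Field K] [Fintype K] [Algebra F K]
    (χ : MulChar F ℂ) (Cs : Finset F) (e : F → ℕ) (k : ℕ) (hk1 : 1 ≤ k)
    (hk : Fintype.card K = Fintype.card F ^ k) :
    ∑ x : K, χ (Algebra.norm F (∏ c ∈ Cs, (x + algebraMap F K c) ^ e c)) =
    ∑ p ∈ k.divisorsAntidiagonal, ∑ P ∈ WIr F p.1, (p.1 : ℂ) * WX χ Cs e P ^ p.2 := by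
  classical
  have hfd : FiniteDimensional F K := Module.Finite.of_finite
  have hfr : Module.finrank F K = k := by
    have := Module.card_eq_pow_finrank (K := F) (V := K)
    rw [hk] at this
    exact (Nat.pow_right_injective Fintype.one_lt_card this).symm
  have hterm : ∀ x : K, χ (Algebra.norm F (∏ c ∈ Cs, (x + algebraMap F K c) ^ e c)) =
      WX χ Cs e (minpoly F x) ^ (k / (minpoly F x).natDegree) := by
    intro x
    unfold WX
    rw [← map_pow, map_prod, ← Finset.prod_pow]
    congr 1
    apply Finset.prod_congr rfl
    intro c _
    rw [map_pow, W_norm_shift, hfr, ← pow_mul, ← pow_mul, mul_comm (k / _)]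
  have hdiv : ∀ x : K, (minpoly F x).natDegree ∣ k := by
    intro x
    have hx : IsIntegral F x := Algebra.IsIntegral.isIntegral x
    have h2 := Module.finrank_mul_finrank F (IntermediateField.adjoin F {x}) K
    rw [IntermediateField.adjoin.finrank hx, hfr] at h2
    exact ⟨_, h2.symm⟩
  rw [Nat.sum_divisorsAntidiagonal (f := fun d j => ∑ P ∈ WIr F d, (d : ℂ) * WX χ Cs e P ^ j)]
  have hR : ∀ d ∈ k.divisors, ∑ P ∈ WIr F d, (d : ℂ) * WX χ Cs e P ^ (k / d) =
      ∑ P ∈ WIr F d, ∑ x ∈ (Finset.univ : Finset K).filter (fun x => minpoly F x = P),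
        WX χ Cs e (minpoly F x) ^ (k / (minpoly F x).natDegree) := by
    intro d hd
    apply Finset.sum_congr rfl
    intro P hP
    obtain ⟨hPm, hPd, hPi⟩ := W_mem_ir.1 hP
    have : ∀ x ∈ (Finset.univ : Finset K).filter (fun x => minpoly F x = P),
      WX χ Cs e (minpoly F x) ^ (k / (minpoly F x).natDegree) = WX χ Cs e P ^ (k / d) := by
      intro x hx
      rw [(mem_filter.1 hx).2, hPd]
    rw [Finset.sum_congr rfl this, Finset.sum_const,
      W_fib k hk P hPm hPi (by rw [hPd]; exact Nat.dvd_of_mem_divisors hd), hPd, nsmul_eq_mul]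
  rw [Finset.sum_congr rfl hR, ← Finset.sum_biUnion]
  · rw [Finset.sum_fiberwise_of_maps_to]
    · exact Finset.sum_congr rfl (fun x _ => hterm x)
    · intro x _
      have hx : IsIntegral F x := Algebra.IsIntegral.isIntegral x
      rw [mem_biUnion]
      exact ⟨_, Nat.mem_divisors.2 ⟨hdiv x, by omega⟩,
        W_mem_ir.2 ⟨minpoly.monic hx, rfl, minpoly.irreducible hx⟩⟩
  · intro d _ d' _ hdd
    rw [Function.onFun, Finset.disjoint_left]
    intro P h1 h2
    exact hdd ((W_mem_ir.1 h1).2.1.symm.trans (W_mem_ir.1 h2).2.1)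

lemma W_weil0 {F : Type*} [Field F] [Fintype F] (χ : MulChar F ℂ)
    (hord : orderOf χ = Fintype.card F - 1)
    (Cs : Finset F) (e : F → ℕ) (c0 : F) (hc0 : c0 ∈ Cs) (he0 : ¬ (Fintype.card F - 1) ∣ e c0)
    (h0 : (0:F) ∉ Cs) :
    ‖∑ x : F, χ (∏ c ∈ Cs, (x + c) ^ e c)‖ ≤
      ((Cs.card : ℝ) - 1) * Real.sqrt (Fintype.card F) := by
  classical
  have hcp : 0 < Cs.card := Finset.card_pos.2 ⟨c0, hc0⟩
  set a : ℕ → ℂ := fun n => ∑ g ∈ WMon F n, WX χ Cs e g with ha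
  set s : ℕ → ℂ := fun k => ∑ p ∈ k.divisorsAntidiagonal, ∑ P ∈ WIr F p.1,
    (p.1 : ℂ) * WX χ Cs e P ^ p.2 with hs
  have hrec : ∀ n : ℕ, (n : ℂ) * a n = ∑ x ∈ antidiagonal n with x.1 < n, a x.1 * s x.2 := by
    intro n
    exact W_rec (WX χ Cs e) (W_X_one χ Cs e) (W_X_mul χ Cs e) n
  have ha0 : a 0 = 1 := W_mon_zero χ Cs e
  obtain ⟨α, hα⟩ := W_newton a s (Cs.card - 1) ha0
    (fun n hn => W_vanish χ hord Cs e c0 hc0 he0 n (by omega)) hrec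
  obtain ⟨A, hA⟩ := W_ext χ hord Cs e c0 hc0 he0 h0
  have hq : (0:ℝ) < Fintype.card F := by exact_mod_cast Fintype.card_pos
  have hb : ∀ n : ℕ, 1 ≤ n → ‖∑ i, (α i ^ 2) ^ n‖ ≤ A * (Fintype.card F : ℝ) ^ n := by
    intro n hn
    obtain ⟨p, hp⟩ := CharP.exists F
    have : Fact p.Prime := ⟨CharP.char_is_prime F p⟩
    have : NeZero (2 * n) := ⟨by omega⟩
    have : Finite (FiniteField.Extension F p (2 * n)) := Module.finite_of_finite F
    let _ : Fintype (FiniteField.Extension F p (2 * n)) := Fintype.ofFinite _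
    have hc : Fintype.card (FiniteField.Extension F p (2 * n)) = Fintype.card F ^ (2 * n) := by
      rw [← Nat.card_eq_fintype_card, ← Nat.card_eq_fintype_card,
        FiniteField.natCard_extension]
    have h1 := hA n (FiniteField.Extension F p (2 * n)) hc
    rw [W_ext_sum χ Cs e (2 * n) (by omega) hc] at h1
    have h2 := hα (2 * n) (by omega)
    rw [hs] at h2
    simp only at h2
    rw [h2, norm_neg] at h1
    simpa only [pow_mul] using h1
  have hle := W_limit (Cs.card - 1) (fun i => α i ^ 2) A (Fintype.card F) hq hb
  have hle' : ∀ i, ‖α i‖ ≤ Real.sqrt (Fintype.card F) := by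
    intro i
    apply Real.le_sqrt_of_sq_le
    have := hle i
    rwa [norm_pow] at this
  have hs1 : a 1 = s 1 := by
    have := hrec 1
    have hf : (antidiagonal 1).filter (fun x : ℕ × ℕ => x.1 < 1) = {(0, 1)} := by decide
    rw [hf, sum_singleton, ha0] at this
    simpa using this
  rw [← W_mon_one]
  change ‖a 1‖ ≤ _
  rw [hs1, hα 1 le_rfl, norm_neg]
  refine (norm_sum_le _ _).trans ?_
  simp only [pow_one]
  refine (Finset.sum_le_sum (fun i _ => hle' i)).trans ?_
  rw [Finset.sum_const, Finset.card_univ, Fintype.card_fin, nsmul_eq_mul, Nat.cast_sub hcp]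
  simp

lemma W_weil {F : Type*} [Field F] [Fintype F] (χ : MulChar F ℂ)
    (hord : orderOf χ = Fintype.card F - 1)
    (Cs : Finset F) (e : F → ℕ) (c0 : F) (hc0 : c0 ∈ Cs) (he0 : ¬ (Fintype.card F - 1) ∣ e c0) :
    ‖∑ x : F, χ (∏ c ∈ Cs, (x + c) ^ e c)‖ ≤
      ((Cs.card : ℝ) - 1) * Real.sqrt (Fintype.card F) := by
  classical
  by_cases hu : ∃ y, y ∉ Cs
  · obtain ⟨y, hy⟩ := hu
    have h := W_weil0 χ hord (Cs.image (fun c => c - y)) (fun c => e (c + y)) (c0 - y)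
      (mem_image_of_mem _ hc0) (by simpa using he0) (by
        intro h
        obtain ⟨c, hc, hcy⟩ := mem_image.1 h
        rw [sub_eq_zero] at hcy
        exact hy (hcy ▸ hc))
    rw [Finset.card_image_of_injective _ (sub_left_injective)] at h
    convert h using 2
    rw [← Equiv.sum_comp (Equiv.subRight y)]
    apply Finset.sum_congr rfl
    intro x _
    congr 1
    rw [Finset.prod_image (fun a _ b _ hab => sub_left_injective hab)]
    apply Finset.prod_congr rfl
    intro c _
    simp only [Equiv.subRight_apply, sub_add_cancel]
    congr 1
    ring
  · push Not at hu
    have hCs : Cs = univ := Finset.eq_univ_iff_forall.2 hu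
    have hq1 : 1 < Fintype.card F := Fintype.one_lt_card
    have hq2 : Fintype.card F ≠ 2 := by
      intro h; rw [h] at he0; simp at he0
    have hq : (3:ℝ) ≤ Fintype.card F := by exact_mod_cast (by omega : 3 ≤ Fintype.card F)
    have h1 : ‖∑ x : F, χ (∏ c ∈ Cs, (x + c) ^ e c)‖ ≤ (Fintype.card F : ℝ) := by
      refine (norm_sum_le _ _).trans ?_
      refine (Finset.sum_le_sum (fun i _ => W_norm_le χ _)).trans ?_
      simp
    refine h1.trans ?_
    rw [hCs, Finset.card_univ]
    set q : ℝ := ((Fintype.card F : ℕ) : ℝ)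
    have h3 := Real.sq_sqrt (by linarith : (0:ℝ) ≤ q)
    have h4 : (3/2 : ℝ) ≤ Real.sqrt q := Real.le_sqrt_of_sq_le (by norm_num; linarith)
    nlinarith

lemma W_cover {N : ℕ} (j : Fin N → Fin N) (hj : ∀ i, j i ≠ i) :
    ∃ B : Finset (Fin N), (∀ i, ∃ n : ℕ, j^[n] i ∈ B) ∧ 2 * B.card ≤ N := by
  classical
  set Sg : Finset (Finset (Fin N)) := univ.filter (fun B => ∀ i, ∃ n : ℕ, j^[n] i ∈ B) with hSg
  have hne : Sg.Nonempty := ⟨univ, by simp [hSg]⟩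
  obtain ⟨B, hB, hmin⟩ := Finset.exists_min_image Sg Finset.card hne
  have hB' := (mem_filter.1 hB).2
  refine ⟨B, hB', ?_⟩
  have h1 : ∀ b ∈ B, j b ∉ B := by
    intro b hb hjb
    have hmem : B.erase b ∈ Sg := by
      rw [hSg, mem_filter]
      refine ⟨mem_univ _, fun i => ?_⟩
      obtain ⟨n, hn⟩ := hB' i
      by_cases hnb : j^[n] i = b
      · refine ⟨n + 1, ?_⟩
        rw [Function.iterate_succ_apply', hnb, mem_erase]
        exact ⟨hj b, hjb⟩
      · exact ⟨n, mem_erase.2 ⟨hnb, hn⟩⟩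
    have := hmin _ hmem
    have := Finset.card_erase_lt_of_mem hb
    omega
  have h2 : Set.InjOn j B := by
    intro b1 hb1 b2 hb2 h12
    by_contra hne
    have hmem : insert (j b1) ((B.erase b1).erase b2) ∈ Sg := by
      rw [hSg, mem_filter]
      refine ⟨mem_univ _, fun i => ?_⟩
      obtain ⟨n, hn⟩ := hB' i
      by_cases hnb : j^[n] i = b1
      · refine ⟨n + 1, ?_⟩
        rw [Function.iterate_succ_apply', hnb]
        exact mem_insert_self _ _
      · by_cases hnb2 : j^[n] i = b2
        · refine ⟨n + 1, ?_⟩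
          rw [Function.iterate_succ_apply', hnb2, ← h12]
          exact mem_insert_self _ _
        · exact ⟨n, mem_insert_of_mem (mem_erase.2 ⟨hnb2, mem_erase.2 ⟨hnb, hn⟩⟩)⟩
    have h3 := hmin _ hmem
    have h4 := Finset.card_insert_le (j b1) ((B.erase b1).erase b2)
    have h5 := Finset.card_erase_lt_of_mem (mem_erase.2 ⟨Ne.symm hne, hb2⟩ : b2 ∈ B.erase b1)
    have h6 := Finset.card_erase_lt_of_mem hb1
    omega
  have h3 : B.card ≤ Bᶜ.card := by
    apply Finset.card_le_card_of_injOn j _ h2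
    intro b hb
    simpa using h1 b hb
  rw [Finset.card_compl, Fintype.card_fin] at h3
  have := Finset.card_le_univ B
  rw [Fintype.card_fin] at this
  omega

lemma W_bad {F : Type*} [DecidableEq F] (T : Finset F) (hT : T.Nonempty) (A : F → F) (r : ℕ) (hr : 1 ≤ r)
    [DecidablePred fun y : Fin (2 * r) → F => ∀ i, ∃ k, k ≠ i ∧ (y i = y k ∨ y i = A (y k))] :
    ((Fintype.piFinset fun _ : Fin (2 * r) => T).filter
      (fun y => ∀ i, ∃ k, k ≠ i ∧ (y i = y k ∨ y i = A (y k)))).card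
      ≤ (2 * r) ^ (4 * r) * T.card ^ r := by
  classical
  set Y : (Fin (2 * r) → Fin (2 * r) × Bool) → Finset (Fin (2 * r) → F) := fun f =>
    (Fintype.piFinset fun _ : Fin (2 * r) => T).filter
      (fun y => (∀ i, (f i).1 ≠ i) ∧
        ∀ i, y i = if (f i).2 then y (f i).1 else A (y (f i).1)) with hY
  have hsub : ((Fintype.piFinset fun _ : Fin (2 * r) => T).filter
      (fun y => ∀ i, ∃ k, k ≠ i ∧ (y i = y k ∨ y i = A (y k)))) ⊆ univ.biUnion Y := by
    intro y hy
    obtain ⟨hyT, hyb⟩ := mem_filter.1 hy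
    choose k hk using hyb
    rw [mem_biUnion]
    refine ⟨fun i => (k i, decide (y i = y (k i))), mem_univ _, ?_⟩
    rw [hY, mem_filter]
    refine ⟨hyT, fun i => (hk i).1, fun i => ?_⟩
    by_cases h : y i = y (k i)
    · simp only [decide_eq_true_eq]; rw [if_pos h]; exact h
    · have := (hk i).2.resolve_left h
      simpa [h] using this
  have hcard : ∀ f, (Y f).card ≤ T.card ^ r := by
    intro f
    by_cases hf : ∀ i, (f i).1 ≠ i
    · obtain ⟨B, hB, hB2⟩ := W_cover (fun i => (f i).1) hf
      have hle : (Y f).card ≤ (Fintype.piFinset fun _ : B => T).card := by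
        apply Finset.card_le_card_of_injOn (fun y (b : B) => y b)
        · intro y hy
          have := (mem_filter.1 hy).1
          rw [Fintype.mem_piFinset] at this
          simp only [Finset.mem_coe, Fintype.mem_piFinset]
          exact fun b => this b
        · intro y hy z hz hyz
          have hy2 := (mem_filter.1 hy).2.2
          have hz2 := (mem_filter.1 hz).2.2
          have key : ∀ n : ℕ, ∀ i, (fun i => (f i).1)^[n] i ∈ B → y i = z i := by
            intro n
            induction n with
            | zero => intro i hi; exact congrFun hyz ⟨i, hi⟩
            | succ n ih =>
              intro i hi
              rw [Function.iterate_succ_apply] at hi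
              have := ih _ hi
              rw [hy2 i, hz2 i, this]
          funext i
          obtain ⟨n, hn⟩ := hB i
          exact key n i hn
      refine hle.trans ?_
      rw [Fintype.card_piFinset]
      simp only [prod_const, card_univ, Fintype.card_coe]
      exact Nat.pow_le_pow_right (Finset.card_pos.2 hT) (by omega)
    · have : Y f = ∅ := by
        rw [hY]
        apply Finset.filter_eq_empty_iff.2
        intro y _ h
        exact hf h.1
      rw [this]; simp
  refine (Finset.card_le_card hsub).trans ?_
  refine (Finset.card_biUnion_le_card_mul _ _ _ (fun f _ => hcard f)).trans ?_
  apply Nat.mul_le_mul_right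
  rw [Finset.card_univ, Fintype.card_fun, Fintype.card_prod, Fintype.card_fin, Fintype.card_bool,
    show 4 * r = 2 * (2 * r) by ring, pow_mul (2 * r) 2]
  apply Nat.pow_le_pow_left
  nlinarith

lemma W_tuple {F : Type*} [Field F] [Fintype F] (χ : MulChar F ℂ)
    (hord : orderOf χ = Fintype.card F - 1) (N : ℕ) (y z : Fin N → F) (u v : Fin N → ℕ) (i0 : Fin N)
    (hu : ¬ (Fintype.card F - 1) ∣ u i0) (h1 : ∀ j, j ≠ i0 → y i0 ≠ y j) (h2 : ∀ j, y i0 ≠ z j) :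
    ‖∑ s : F, ∏ i, (χ (s + y i) ^ u i * χ (s + z i) ^ v i)‖ ≤
      (2 * (N : ℝ) - 1) * Real.sqrt (Fintype.card F) := by
  classical
  set Cs : Finset F := univ.image y ∪ univ.image z with hCs
  have hy : ∀ i, y i ∈ Cs := fun i => mem_union_left _ (mem_image_of_mem _ (mem_univ i))
  have hz : ∀ i, z i ∈ Cs := fun i => mem_union_right _ (mem_image_of_mem _ (mem_univ i))
  set e : F → ℕ := fun c => ∑ i, ((if c = y i then u i else 0) + (if c = z i then v i else 0)) with he
  have hprod : ∀ s : F, χ (∏ c ∈ Cs, (s + c) ^ e c) = ∏ i, (χ (s + y i) ^ u i * χ (s + z i) ^ v i) := by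
    intro s
    have : ∏ c ∈ Cs, (s + c) ^ e c = ∏ i, ((s + y i) ^ u i * (s + z i) ^ v i) := by
      simp only [he]
      simp only [← Finset.prod_pow_eq_pow_sum]
      rw [Finset.prod_comm]
      apply Finset.prod_congr rfl
      intro i _
      simp only [pow_add, Finset.prod_mul_distrib]
      congr 1
      · rw [Finset.prod_eq_single (y i)]
        · simp
        · intro b _ hb; simp [hb]
        · intro h; exact absurd (hy i) h
      · rw [Finset.prod_eq_single (z i)]
        · simp
        · intro b _ hb; simp [hb]
        · intro h; exact absurd (hz i) h
    rw [this, map_prod]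
    apply Finset.prod_congr rfl
    intro i _
    rw [map_mul, map_pow, map_pow]
  have he0 : e (y i0) = u i0 := by
    rw [he]
    simp only
    rw [Finset.sum_eq_single i0]
    · simp [h2 i0]
    · intro j _ hj
      simp [h1 j hj, h2 j]
    · intro h; exact absurd (mem_univ _) h
  have hw := W_weil χ hord Cs e (y i0) (hy i0) (by rw [he0]; exact hu)
  rw [Finset.sum_congr rfl (fun s _ => hprod s)] at hw
  refine hw.trans ?_
  apply mul_le_mul_of_nonneg_right _ (Real.sqrt_nonneg _)
  have hc : Cs.card ≤ 2 * N := by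
    refine (Finset.card_union_le _ _).trans ?_
    have h3 := Finset.card_image_le (s := (univ : Finset (Fin N))) (f := y)
    have h4 := Finset.card_image_le (s := (univ : Finset (Fin N))) (f := z)
    rw [Finset.card_univ, Fintype.card_fin] at h3 h4
    omega
  have : (Cs.card : ℝ) ≤ 2 * N := by exact_mod_cast hc
  linarith

lemma W_conj {F : Type*} [Field F] [Fintype F] (χ : MulChar F ℂ) (hq : 3 ≤ Fintype.card F) (x : F) :
    (starRingEnd ℂ) (χ x) = χ x ^ (Fintype.card F - 2) := by
  by_cases hx : x = 0
  · subst hx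
    rw [MulChar.map_zero, map_zero, zero_pow (by omega)]
  · have h1 : χ x ^ (Fintype.card F - 1) = 1 := by
      rw [← map_pow, FiniteField.pow_card_sub_one_eq_one x hx, map_one]
    have h2 : ‖χ x‖ = 1 := Complex.norm_eq_one_of_pow_eq_one h1 (by omega)
    have h3 : χ x * χ x ^ (Fintype.card F - 2) = 1 := by
      rw [← pow_succ', ← h1]; congr 1; omega
    rw [← Complex.inv_eq_conj h2]
    exact inv_eq_of_mul_eq_one_right h3

lemma W_moment {F : Type*} [Field F] [Fintype F] (χ : MulChar F ℂ)
    (a b : ℕ) (hq : 3 ≤ Fintype.card F) (T : Finset F) (A : F → F) (r : ℕ)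
    (θ : F → ℂ) (hθ : ∀ y, ‖θ y‖ ≤ 1) (ex : Fin (2 * r) → ℕ)
    (hex : ex = fun i : Fin (2 * r) => if (i : ℕ) < r then 1 else Fintype.card F - 2) :
    ∑ s : F, ‖∑ y ∈ T, θ y * (χ (s + y) ^ a * χ (s + A y) ^ b)‖ ^ (2 * r) ≤
      ∑ y ∈ Fintype.piFinset (fun _ : Fin (2 * r) => T),
        ‖∑ s : F, ∏ i, (χ (s + y i) ^ (a * ex i) * χ (s + A (y i)) ^ (b * ex i))‖ := by
  classical
  set G : F → ℂ := fun s => ∑ y ∈ T, θ y * (χ (s + y) ^ a * χ (s + A y) ^ b) with hG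
  set th : Fin (2 * r) → F → ℂ := fun i y => if (i : ℕ) < r then θ y else (starRingEnd ℂ) (θ y) with hth
  have hthn : ∀ i y, ‖th i y‖ ≤ 1 := by
    intro i y
    rw [hth]; simp only
    split_ifs
    · exact hθ y
    · rw [RCLike.norm_conj]; exact hθ y
  have hH : ∀ s (i : Fin (2 * r)), (if (i : ℕ) < r then G s else (starRingEnd ℂ) (G s)) =
      ∑ y ∈ T, th i y * (χ (s + y) ^ (a * ex i) * χ (s + A y) ^ (b * ex i)) := by
    intro s i
    rw [hth, hex]; simp only
    split_ifs with h
    · simp [hG]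
    · rw [hG]
      simp only [map_sum, map_mul, map_pow, W_conj χ hq]
      apply Finset.sum_congr rfl
      intro y _
      rw [← pow_mul, ← pow_mul, mul_comm a, mul_comm b]
  have hpow : ∀ s, ((‖G s‖ ^ (2 * r) : ℝ) : ℂ) = ∑ y ∈ Fintype.piFinset (fun _ : Fin (2 * r) => T),
      (∏ i, th i (y i)) * ∏ i, (χ (s + y i) ^ (a * ex i) * χ (s + A (y i)) ^ (b * ex i)) := by
    intro s
    have h1 : ((‖G s‖ ^ (2 * r) : ℝ) : ℂ) =
        ∏ i : Fin (2 * r), (if (i : ℕ) < r then G s else (starRingEnd ℂ) (G s)) := by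
      rw [Fin.prod_univ_eq_prod_range (fun i => if i < r then G s else (starRingEnd ℂ) (G s)) (2 * r),
        two_mul, Finset.prod_range_add]
      have h2 : ∏ i ∈ range r, (if i < r then G s else (starRingEnd ℂ) (G s)) = G s ^ r := by
        rw [Finset.prod_congr rfl (fun i hi => if_pos (mem_range.1 hi))]; simp
      have h3 : ∏ i ∈ range r, (if r + i < r then G s else (starRingEnd ℂ) (G s)) =
          (starRingEnd ℂ) (G s) ^ r := by
        rw [Finset.prod_congr rfl (fun i hi => if_neg (by omega))]; simp
      rw [h2, h3, ← mul_pow, Complex.mul_conj, ← two_mul, pow_mul, Complex.normSq_eq_norm_sq]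
      push_cast; rfl
    rw [h1, Finset.prod_congr rfl (fun i _ => hH s i), Finset.prod_univ_sum]
    apply Finset.sum_congr rfl
    intro y _
    rw [Finset.prod_mul_distrib]
  have hsum : ((∑ s : F, ‖G s‖ ^ (2 * r) : ℝ) : ℂ) =
      ∑ y ∈ Fintype.piFinset (fun _ : Fin (2 * r) => T), (∏ i, th i (y i)) *
        ∑ s : F, ∏ i, (χ (s + y i) ^ (a * ex i) * χ (s + A (y i)) ^ (b * ex i)) := by
    rw [Complex.ofReal_sum, Finset.sum_congr rfl (fun s _ => hpow s), Finset.sum_comm]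
    simp only [Finset.mul_sum]
  have h0 : 0 ≤ ∑ s : F, ‖G s‖ ^ (2 * r) := Finset.sum_nonneg (fun _ _ => by positivity)
  have h1 : ∑ s : F, ‖G s‖ ^ (2 * r) = ‖((∑ s : F, ‖G s‖ ^ (2 * r) : ℝ) : ℂ)‖ := by
    rw [Complex.norm_real, Real.norm_of_nonneg h0]
  change ∑ s : F, ‖G s‖ ^ (2 * r) ≤ _
  rw [h1, hsum]
  refine (norm_sum_le _ _).trans (Finset.sum_le_sum ?_)
  intro y _
  rw [norm_mul, norm_prod]
  have : ∏ i, ‖th i (y i)‖ ≤ 1 := Finset.prod_le_one (fun _ _ => norm_nonneg _) (fun i _ => hthn i _)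
  exact mul_le_of_le_one_left (norm_nonneg _) this

lemma W_Wsq {F : Type*} [Field F] [Fintype F] (χ : MulChar F ℂ)
    (hord : orderOf χ = Fintype.card F - 1)
    (a b : ℕ) (ha : 0 < a) (ha' : a < Fintype.card F - 1)
    (T : Finset F) (hT : T.Nonempty)
    (A : F → F) (hA : ∀ y, A y ≠ y) (r : ℕ) (hr : 1 ≤ r) (ex : Fin (2 * r) → ℕ)
    (hex : ex = fun i : Fin (2 * r) => if (i : ℕ) < r then 1 else Fintype.card F - 2) :
    ∑ y ∈ Fintype.piFinset (fun _ : Fin (2 * r) => T),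
        ‖∑ s : F, ∏ i, (χ (s + y i) ^ (a * ex i) * χ (s + A (y i)) ^ (b * ex i))‖ ^ 2 ≤
      (T.card : ℝ) ^ (2 * r) * ((4 * (r : ℝ) - 1) ^ 2 * Fintype.card F) +
      (2 * (r : ℝ)) ^ (4 * r) * (T.card : ℝ) ^ r * (Fintype.card F : ℝ) ^ 2 := by
  classical
  set q := Fintype.card F with hq
  have hdv : ∀ i, ¬ (q - 1) ∣ a * ex i := by
    intro i
    have h1 : ¬ (q - 1) ∣ a := fun h => absurd (Nat.le_of_dvd ha h) (by omega)
    rw [hex]; simp only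
    split_ifs
    · simpa using h1
    · intro h
      apply h1
      refine Nat.Coprime.dvd_of_dvd_mul_right ?_ h
      have : q - 1 = (q - 2) + 1 := by omega
      rw [this]
      simp
  set W : (Fin (2 * r) → F) → ℝ := fun y =>
    ‖∑ s : F, ∏ i, (χ (s + y i) ^ (a * ex i) * χ (s + A (y i)) ^ (b * ex i))‖ with hW
  set bad : (Fin (2 * r) → F) → Prop :=
    fun y => ∀ i, ∃ k, k ≠ i ∧ (y i = y k ∨ y i = A (y k)) with hbad
  have hr1 : (1 : ℝ) ≤ r := by exact_mod_cast hr
  have hgood : ∀ y, ¬ bad y → W y ^ 2 ≤ (4 * (r : ℝ) - 1) ^ 2 * q := by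
    intro y hy
    rw [hbad] at hy
    push Not at hy
    obtain ⟨i0, hi0⟩ := hy
    have := W_tuple χ hord (2 * r) y (fun i => A (y i)) (fun i => a * ex i) (fun i => b * ex i) i0
      (hdv i0) (fun j hj => (hi0 j hj).1) (by
        intro j
        by_cases hj : j = i0
        · rw [hj]; exact (hA _).symm
        · exact (hi0 j hj).2)
    have h2 : W y ≤ (4 * (r : ℝ) - 1) * Real.sqrt q := by
      refine this.trans (le_of_eq ?_)
      push_cast; ring
    calc W y ^ 2 ≤ ((4 * (r : ℝ) - 1) * Real.sqrt q) ^ 2 :=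
          pow_le_pow_left₀ (norm_nonneg _) h2 2
      _ = _ := by rw [mul_pow, Real.sq_sqrt (Nat.cast_nonneg _)]
  have hall : ∀ y, W y ^ 2 ≤ (q : ℝ) ^ 2 := by
    intro y
    apply pow_le_pow_left₀ (norm_nonneg _)
    refine (norm_sum_le _ _).trans ?_
    have : ∀ s ∈ (univ : Finset F),
      ‖∏ i, (χ (s + y i) ^ (a * ex i) * χ (s + A (y i)) ^ (b * ex i))‖ ≤ 1 := by
      intro s _
      rw [norm_prod]
      apply Finset.prod_le_one (fun _ _ => norm_nonneg _)
      intro i _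
      rw [norm_mul, norm_pow, norm_pow]
      exact mul_le_one₀ (pow_le_one₀ (norm_nonneg _) (W_norm_le χ _)) (by positivity)
        (pow_le_one₀ (norm_nonneg _) (W_norm_le χ _))
    refine (Finset.sum_le_sum this).trans ?_
    simp [hq]
  change ∑ y ∈ Fintype.piFinset (fun _ : Fin (2 * r) => T), W y ^ 2 ≤ _
  rw [← Finset.sum_filter_add_sum_filter_not _ bad, add_comm]
  apply add_le_add
  · refine (Finset.sum_le_card_nsmul _ _ ((4 * (r : ℝ) - 1) ^ 2 * q)
      (fun y hy => hgood y (mem_filter.1 hy).2)).trans ?_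
    rw [nsmul_eq_mul]
    apply mul_le_mul_of_nonneg_right _ (by positivity)
    have h1 := Finset.card_filter_le (Fintype.piFinset (fun _ : Fin (2 * r) => T)) (fun y => ¬ bad y)
    rw [Fintype.card_piFinset] at h1
    simp only [prod_const, card_univ, Fintype.card_fin] at h1
    exact_mod_cast h1
  · refine (Finset.sum_le_card_nsmul _ _ ((q : ℝ) ^ 2) (fun y hy => hall y)).trans ?_
    rw [nsmul_eq_mul]
    apply mul_le_mul_of_nonneg_right _ (by positivity)
    have h1 := W_bad T hT A r hr
    exact_mod_cast h1

lemma W_holder {F : Type*} [Field F] [Fintype F] (K : F → F → ℂ) (S T : Finset F) (r : ℕ) (hr : 1 ≤ r) :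
    ∃ θ : F → ℂ, (∀ y, ‖θ y‖ ≤ 1) ∧ (∑ y ∈ T, ‖∑ s ∈ S, K s y‖) ^ (2 * r) ≤
      (S.card : ℝ) ^ (2 * r - 1) * ∑ s : F, ‖∑ y ∈ T, θ y * K s y‖ ^ (2 * r) := by
  classical
  have hex : ∀ z : ℂ, ∃ t : ℂ, ‖t‖ ≤ 1 ∧ (‖z‖ : ℂ) = t * z := by
    intro z
    by_cases hz : z = 0
    · exact ⟨0, by simp, by simp [hz]⟩
    · refine ⟨‖z‖ / z, ?_, ?_⟩
      · rw [norm_div, Complex.norm_real, norm_norm, div_self (norm_ne_zero_iff.2 hz)]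
      · field_simp
  choose t ht1 ht2 using hex
  refine ⟨fun y => t (∑ s ∈ S, K s y), fun y => ht1 _, ?_⟩
  set θ : F → ℂ := fun y => t (∑ s ∈ S, K s y) with hθ
  have h1 : ((∑ y ∈ T, ‖∑ s ∈ S, K s y‖ : ℝ) : ℂ) = ∑ s ∈ S, ∑ y ∈ T, θ y * K s y := by
    rw [Finset.sum_comm, Complex.ofReal_sum]
    apply Finset.sum_congr rfl
    intro y _
    rw [ht2, Finset.mul_sum]
  have h0 : 0 ≤ ∑ y ∈ T, ‖∑ s ∈ S, K s y‖ := Finset.sum_nonneg (fun _ _ => norm_nonneg _)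
  have h2 : ∑ y ∈ T, ‖∑ s ∈ S, K s y‖ ≤ ∑ s ∈ S, ‖∑ y ∈ T, θ y * K s y‖ := by
    have : ∑ y ∈ T, ‖∑ s ∈ S, K s y‖ = ‖((∑ y ∈ T, ‖∑ s ∈ S, K s y‖ : ℝ) : ℂ)‖ := by
      rw [Complex.norm_real, Real.norm_of_nonneg h0]
    rw [this, h1]
    exact norm_sum_le _ _
  refine (pow_le_pow_left₀ h0 h2 _).trans ?_
  have h3 := pow_sum_div_card_le_sum_pow (s := S) (f := fun s => ‖∑ y ∈ T, θ y * K s y‖)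
    (fun _ _ => norm_nonneg _) (2 * r - 1)
  rw [Nat.sub_add_cancel (by omega)] at h3
  have h4 : ∑ s ∈ S, ‖∑ y ∈ T, θ y * K s y‖ ^ (2 * r) ≤ ∑ s : F, ‖∑ y ∈ T, θ y * K s y‖ ^ (2 * r) :=
    Finset.sum_le_sum_of_subset_of_nonneg (subset_univ _) (fun _ _ _ => by positivity)
  rcases S.eq_empty_or_nonempty with hS | hS
  · subst hS
    simp only [sum_empty]
    rw [zero_pow (by omega)]
    positivity
  · have hp : (0:ℝ) < (S.card : ℝ) ^ (2 * r - 1) := by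
      have : (0:ℝ) < S.card := by exact_mod_cast Finset.card_pos.2 hS
      positivity
    rw [div_le_iff₀ hp] at h3
    refine h3.trans ?_
    rw [mul_comm]
    exact mul_le_mul_of_nonneg_left h4 hp.le


/-- parameterized double character sum: Let F = F_q, χ of order q-1,
χ_a = χ^a (0 < a < q-1), χ_b = χ^b (0 ≤ b < q-1), S, T nonempty subsets of F,
A : F → F with no fixed points. Then for each natural number r ≥ 1,
∑_{y∈T} |∑_{s∈S} χ_a(s+y)·χ_b(s+A(y))| ≤ λ_r · q^{1/(4r)} · |S|^{1-1/(2r)} · |T|,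
where λ_r = ((4r-1)² + (2r)^{4r}·q·|T|^{-r})^{1/(4r)}. -/
theorem stmt_10 {F : Type*} [Field F] [Fintype F]
    (χ : MulChar F ℂ) (hord : orderOf χ = Fintype.card F - 1)
    (a b : ℕ) (ha : 0 < a) (ha' : a < Fintype.card F - 1) (hb : b < Fintype.card F - 1)
    (S T : Finset F) (hS : S.Nonempty) (hT : T.Nonempty)
    (A : F → F) (hA : ∀ y, A y ≠ y) (r : ℕ) (hr : 1 ≤ r) :
    ∑ y ∈ T, ‖∑ s ∈ S, (χ (s + y)) ^ a * (χ (s + A y)) ^ b‖ ≤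
      ((4 * (r : ℝ) - 1) ^ 2 +
          (2 * (r : ℝ)) ^ (4 * r) * (Fintype.card F : ℝ) * (T.card : ℝ) ^ (-(r : ℝ)))
        ^ (1 / (4 * (r : ℝ))) *
      (Fintype.card F : ℝ) ^ (1 / (4 * (r : ℝ))) *
      (S.card : ℝ) ^ (1 - 1 / (2 * (r : ℝ))) * (T.card : ℝ) := by
  classical
  have hq3 : 3 ≤ Fintype.card F := by omega
  set q : ℝ := ((Fintype.card F : ℕ) : ℝ) with hq
  have hq0 : 0 < q := by rw [hq]; exact_mod_cast (by omega : 0 < Fintype.card F)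
  have hs0 : (0:ℝ) < S.card := by exact_mod_cast Finset.card_pos.2 hS
  have ht0 : (0:ℝ) < T.card := by exact_mod_cast Finset.card_pos.2 hT
  have hr0 : (0:ℝ) < r := by exact_mod_cast (by omega : 0 < r)
  obtain ⟨θ, hθ, h1⟩ := W_holder (fun s y => χ (s + y) ^ a * χ (s + A y) ^ b) S T r hr
  set L := ∑ y ∈ T, ‖∑ s ∈ S, (χ (s + y)) ^ a * (χ (s + A y)) ^ b‖ with hL
  have hL0 : 0 ≤ L := Finset.sum_nonneg (fun _ _ => norm_nonneg _)
  have h2 := W_moment χ a b hq3 T A r θ hθ _ rfl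
  have h3 := W_Wsq χ hord a b ha ha' T hT A hA r hr _ rfl
  set W : (Fin (2 * r) → F) → ℝ := fun y => ‖∑ s : F, ∏ i, (χ (s + y i) ^
    (a * (fun i : Fin (2 * r) => if (i : ℕ) < r then 1 else Fintype.card F - 2) i) *
    χ (s + A (y i)) ^
    (b * (fun i : Fin (2 * r) => if (i : ℕ) < r then 1 else Fintype.card F - 2) i))‖ with hW
  have h4 := sq_sum_le_card_mul_sum_sq (s := Fintype.piFinset (fun _ : Fin (2 * r) => T)) (f := W)
  rw [Fintype.card_piFinset] at h4
  simp only [prod_const, card_univ, Fintype.card_fin, Nat.cast_pow] at h4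
  set M := ∑ s : F, ‖∑ y ∈ T, θ y * (χ (s + y) ^ a * χ (s + A y) ^ b)‖ ^ (2 * r) with hM
  have hM0 : 0 ≤ M := Finset.sum_nonneg (fun _ _ => by positivity)
  set t : ℝ := (T.card : ℝ) with ht
  set σ : ℝ := (S.card : ℝ) with hσ
  have h5 : M ^ 2 ≤ t ^ (2 * r) * (t ^ (2 * r) * ((4 * (r : ℝ) - 1) ^ 2 * q) +
      (2 * (r : ℝ)) ^ (4 * r) * t ^ r * q ^ 2) := by
    refine (pow_le_pow_left₀ hM0 h2 2).trans (h4.trans ?_)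
    exact mul_le_mul_of_nonneg_left h3 (by positivity)
  have h6 : L ^ (4 * r) ≤ (σ ^ (2 * r - 1)) ^ 2 * M ^ 2 := by
    rw [← mul_pow, show 4 * r = 2 * r * 2 by ring, pow_mul]
    exact pow_le_pow_left₀ (by positivity) h1 2
  have hlam : 0 ≤ (4 * (r : ℝ) - 1) ^ 2 + (2 * (r : ℝ)) ^ (4 * r) * q * t ^ (-(r : ℝ)) := by
    positivity
  have hroot : ∀ x : ℝ, 0 ≤ x → (x ^ (1 / (4 * (r : ℝ)))) ^ (4 * r) = x := by
    intro x hx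
    rw [← Real.rpow_natCast, ← Real.rpow_mul hx]
    push_cast
    rw [one_div, inv_mul_cancel₀ (by positivity), Real.rpow_one]
  have hsig : (σ ^ (1 - 1 / (2 * (r : ℝ)))) ^ (4 * r) = (σ ^ (2 * r - 1)) ^ 2 := by
    rw [← Real.rpow_natCast, ← Real.rpow_mul hs0.le, ← pow_mul, ← Real.rpow_natCast]
    congr 1
    push_cast [Nat.cast_sub (by omega : 1 ≤ 2 * r)]
    field_simp
    ring
  have htr : t ^ (-(r : ℝ)) * t ^ r = 1 := by
    rw [← Real.rpow_natCast t r, ← Real.rpow_add ht0]; simp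
  refine le_of_pow_le_pow_left₀ (n := 4 * r) (by omega) (by positivity) ?_
  rw [mul_pow, mul_pow, mul_pow, hroot _ hlam, hroot _ hq0.le, hsig]
  refine h6.trans ((mul_le_mul_of_nonneg_left h5 (by positivity)).trans (le_of_eq ?_))
  have e1 : t ^ (4 * r) = t ^ r * t ^ r * t ^ r * t ^ r := by
    rw [← pow_add, ← pow_add, ← pow_add]; congr 1; ring
  have e2 : t ^ (2 * r) = t ^ r * t ^ r := by
    rw [← pow_add]; congr 1; ring
  rw [e1, e2]
  linear_combination -(σ ^ (2 * r - 1)) ^ 2 * (2 * (r : ℝ)) ^ (4 * r) * q ^ 2 * (t ^ r) ^ 3 * htr
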